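/- arXiv:math/0306232 — 9 statements merged into one kernel-verified Lean document; each statement's English description precedes it below -/
import Mathlib

section
/- Let p ≥ 1 and q ≥ 1 be coprime integers, let r ≥ 0 be an integer, and let m ≥ 1. Then the element w_{p,q,r,m} of the free group F is primitive if and only if p = 1, or (m = 1 and r is congruent to 1, −1, q, or −q modulo p). -/
/-- The free group on two generators; `xx` and `yy` are the generators. -/
def xx : FreeGroup (Fin 2) := FreeGroup.of 0
def yy : FreeGroup (Fin 2) := FreeGroup.of 1

/-- The word `w_{p,q,r,m}` represented by the twisted torus knot
`T(p,q) + r T(m,n)` in the inside handlebody: writing `r = r̄ + α p`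
with `0 ≤ r̄ < p`, it is `∏_{j=0}^{p-1} x^{m e_j} y` where `e_j = α+1`
if `(j q mod p) < r̄` and `e_j = α` otherwise. -/
def w (p q r : ℕ) (m : ℤ) : FreeGroup (Fin 2) :=
  ((List.range p).map (fun j =>
    xx ^ (m * ((if j * q % p < r % p then r / p + 1 else r / p : ℕ) : ℤ)) * yy)).prod

/-- An element of the free group of rank two is primitive iff some automorphism
carries the generator `xx` to it. -/
def IsPrimitive (g : FreeGroup (Fin 2)) : Prop :=
  ∃ φ : FreeGroup (Fin 2) ≃* FreeGroup (Fin 2), φ xx = g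

/-- The one-relator group `G_{a,b} = ⟨x, y | x^a y^b⟩`. -/
abbrev Gg (a b : ℤ) : Type := PresentedGroup ({xx ^ a * yy ^ b} : Set (FreeGroup (Fin 2)))

/-- `g` is `(a,b)` Seifert-fibered if `F / ⟪g⟫ ≅ G_{a,b}`. -/
def IsSF (g : FreeGroup (Fin 2)) (a b : ℤ) : Prop :=
  Nonempty (PresentedGroup ({g} : Set (FreeGroup (Fin 2))) ≃* Gg a b)

/-- The automorphism fixing `xx` and sending `yy` to `xx ^ k * yy * xx ^ l`. -/
def transvection (k l : ℤ) : FreeGroup (Fin 2) ≃* FreeGroup (Fin 2) :=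
  MonoidHom.toMulEquiv
    (FreeGroup.lift ![xx, xx ^ k * yy * xx ^ l])
    (FreeGroup.lift ![xx, xx ^ (-k) * yy * xx ^ (-l)])
    (by
      ext i
      fin_cases i <;> simp [xx, yy, mul_assoc])
    (by
      ext i
      fin_cases i <;> simp [xx, yy, mul_assoc])

/-- The automorphism exchanging `xx` and `yy`. -/
def generatorSwap : FreeGroup (Fin 2) ≃* FreeGroup (Fin 2) :=
  FreeGroup.freeGroupCongr (Equiv.swap 0 1)

/-- `A` and `B` form a basis of the free group of rank two. -/
def IsBasisPair (A B : FreeGroup (Fin 2)) : Prop :=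
  ∃ φ : FreeGroup (Fin 2) ≃* FreeGroup (Fin 2), φ xx = A ∧ φ yy = B

namespace IsBasisPair

variable {A B : FreeGroup (Fin 2)}

lemma generators : IsBasisPair xx yy := ⟨MulEquiv.refl _, rfl, rfl⟩

lemma isPrimitive (h : IsBasisPair A B) : IsPrimitive A :=
  let ⟨φ, hφ, _⟩ := h
  ⟨φ, hφ⟩

lemma symm (h : IsBasisPair A B) : IsBasisPair B A := by
  obtain ⟨φ, rfl, rfl⟩ := h
  refine ⟨generatorSwap.trans φ, ?_, ?_⟩ <;> simp [generatorSwap, xx, yy]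

lemma zpow_mul_mul_zpow (h : IsBasisPair A B) (k l : ℤ) :
    IsBasisPair A (A ^ k * B * A ^ l) := by
  obtain ⟨φ, rfl, rfl⟩ := h
  refine ⟨(transvection k l).trans φ, ?_, ?_⟩ <;> simp [transvection, xx, yy]

lemma mul_left (h : IsBasisPair A B) : IsBasisPair (A * B) B := by
  simpa using (h.symm.zpow_mul_mul_zpow 0 1).symm

lemma mul_right (h : IsBasisPair A B) : IsBasisPair A (A * B) := by
  simpa using h.zpow_mul_mul_zpow 1 0

end IsBasisPair

lemma IsPrimitive.conj {g : FreeGroup (Fin 2)} (hg : IsPrimitive g) (h : FreeGroup (Fin 2)) :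
    IsPrimitive (h * g * h⁻¹) := by
  obtain ⟨φ, rfl⟩ := hg
  exact ⟨φ.trans (MulAut.conj h), by simp⟩

/-- `RotationPath a b A B α β s n g`: starting at `s`, moving by `+ a` with letter `A` (of length
`α`) from positions below `b` and by `- b` with letter `B` (of length `β`) from the others, one
reaches `0` along a path of length `n` that reads `g`. -/
inductive RotationPath {G : Type*} [Group G] (a b : ℕ) (A B : G) (α β : ℕ) :
    ℕ → ℕ → G → Prop
  | nil : RotationPath a b A B α β 0 0 1
  | up {s n : ℕ} {g : G} : s < b → RotationPath a b A B α β (s + a) n g →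
      RotationPath a b A B α β s (n + α) (A * g)
  | down {s n : ℕ} {g : G} : b ≤ s → RotationPath a b A B α β (s - b) n g →
      RotationPath a b A B α β s (n + β) (B * g)

namespace RotationPath

variable {G : Type*} [Group G] {a b α β s n : ℕ} {A B g : G}

lemma of_up_mul_down (hab : b ≤ a)
    (h : RotationPath (a - b) b (A * B) B (α + β) β s n g) :
    RotationPath a b A B α β s n g := by
  induction h with
  | nil => exact nil
  | @up s n g hs _ ih =>
    rw [← Nat.add_sub_assoc hab] at ih
    have := up hs (down (by omega) ih)
    rwa [add_assoc, add_comm β, ← mul_assoc] at this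
  | down hs _ ih => exact down hs ih

lemma of_up_mul_up_down (hab : a < b) (hs : s < b)
    (h : RotationPath a (b - a) A (A * B) α (α + β) s n g) :
    RotationPath a b A B α β s n g := by
  induction h with
  | nil => exact nil
  | up hs' _ ih => exact up hs (ih (by omega))
  | @down s n g hs' _ ih =>
    have ih := ih (by omega)
    rw [show s - (b - a) = s + a - b by omega] at ih
    have := up hs (down (by omega) ih)
    rwa [add_assoc, add_comm β, ← mul_assoc] at this

lemma eq_prod (hs : s < a + b) (h : RotationPath a b A B 1 1 s n g) :
    g = ((List.range n).map fun j => if (s + j * a) % (a + b) < b then A else B).prod := by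
  induction h with
  | nil => simp
  | @up s n g hs' _ ih =>
    rw [ih (by omega), List.range_succ_eq_map, List.map_cons, List.prod_cons, List.map_map]
    congr 1
    · simp [Nat.mod_eq_of_lt hs, hs']
    · congr 2
      funext j
      simp only [Function.comp, Nat.succ_eq_add_one]
      rw [show s + a + j * a = s + (j + 1) * a by ring]
  | @down s n g hs' _ ih =>
    rw [ih (by omega), List.range_succ_eq_map, List.map_cons, List.prod_cons, List.map_map]
    congr 1
    · simp [Nat.mod_eq_of_lt hs, hs']
    · congr 2
      funext j
      simp only [Function.comp, Nat.succ_eq_add_one]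
      rw [← Nat.add_mod_right (s - b + j * a),
        show s - b + j * a + (a + b) = s + (j + 1) * a by rw [add_mul]; omega]

end RotationPath

lemma exists_isPrimitive_rotationPath {a b : ℕ} (hab : a.Coprime b) {A B : FreeGroup (Fin 2)}
    (h : IsBasisPair A B) (α β : ℕ) :
    ∃ g, IsPrimitive g ∧ RotationPath a b A B α β 0 (b * α + a * β) g := by
  induction hN : a + b using Nat.strong_induction_on generalizing a b A B α β with
  | _ N ih =>
  rcases Nat.eq_zero_or_pos a with rfl | ha
  · obtain rfl : b = 1 := by simpa using hab
    refine ⟨A, h.isPrimitive, ?_⟩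
    simpa using RotationPath.up (a := 0) (b := 1) (A := A) (B := B) (α := α) (β := β)
      Nat.zero_lt_one .nil
  rcases Nat.eq_zero_or_pos b with rfl | hb
  · obtain rfl : a = 1 := by simpa using hab
    refine ⟨B, h.symm.isPrimitive, ?_⟩
    simpa using RotationPath.down (a := 1) (b := 0) (A := A) (B := B) (α := α) (β := β)
      (s := 0) le_rfl .nil
  rcases le_or_gt b a with hba | hba
  · obtain ⟨g, hg, hpath⟩ := ih (a - b + b) (by omega)
      ((Nat.coprime_sub_self_left hba).2 hab) h.mul_left (α + β) β rfl
    refine ⟨g, hg, ?_⟩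
    convert RotationPath.of_up_mul_down hba hpath using 1
    obtain ⟨c, rfl⟩ := Nat.exists_eq_add_of_le hba
    rw [Nat.add_sub_cancel_left]
    ring
  · obtain ⟨g, hg, hpath⟩ := ih (a + (b - a)) (by omega)
      ((Nat.coprime_sub_self_right hba.le).2 hab) h.mul_right α (α + β) rfl
    refine ⟨g, hg, ?_⟩
    convert RotationPath.of_up_mul_up_down hba hb hpath using 1
    obtain ⟨c, rfl⟩ := Nat.exists_eq_add_of_le hba.le
    rw [Nat.add_sub_cancel_left]
    ring

/-- Christoffel words in a basis are primitive. -/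
lemma isPrimitive_christoffel {a b : ℕ} (hab : a.Coprime b) {A B : FreeGroup (Fin 2)}
    (h : IsBasisPair A B) :
    IsPrimitive
      ((List.range (a + b)).map fun j => if j * a % (a + b) < b then A else B).prod := by
  obtain ⟨g, hg, hpath⟩ := exists_isPrimitive_rotationPath hab h 1 1
  have hpos : 0 < a + b := by
    rcases Nat.eq_zero_or_pos (a + b) with h0 | h0
    · obtain ⟨rfl, rfl⟩ : a = 0 ∧ b = 0 := by omega
      simp at hab
    · exact h0
  have := hpath.eq_prod hpos
  rw [mul_one, mul_one, add_comm b] at this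
  simpa [this] using hg

lemma IsPrimitive.prod_of_shift {p : ℕ} (k : ℕ) {f : ℕ → FreeGroup (Fin 2)}
    (hf : ∀ j, f (j + p) = f j)
    (h : IsPrimitive ((List.range p).map fun j => f (j + k)).prod) :
    IsPrimitive ((List.range p).map f).prod := by
  induction k with
  | zero => simpa using h
  | succ k ih =>
    refine ih ?_
    convert h.conj (f k) using 1
    rw [eq_mul_inv_iff_mul_eq]
    have h₁ := List.prod_range_succ (fun j => f (j + k)) p
    have h₂ := List.prod_range_succ' (fun j => f (j + k)) p
    rw [h₁] at h₂
    simpa [add_comm p k, hf, add_assoc, add_comm 1] using h₂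

section Sufficiency

variable {p q : ℕ} {A B : FreeGroup (Fin 2)}

lemma isPrimitive_prod_lt_sub_mod (hp : 0 < p) (hpq : p.Coprime q) (h : IsBasisPair A B) :
    IsPrimitive ((List.range p).map fun j => if j * q % p < p - q % p then A else B).prod := by
  have hlt := Nat.mod_lt q hp
  have hsum : q % p + (p - q % p) = p := by omega
  have hco : (q % p).Coprime (p - q % p) := by
    rw [Nat.coprime_sub_self_right hlt.le]
    rw [Nat.Coprime, ← Nat.gcd_rec]
    exact hpq
  have := isPrimitive_christoffel hco h
  rw [hsum] at this
  simpa [Nat.mul_mod_mod] using this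

lemma isPrimitive_prod_lt_mod (hp : 0 < p) (hpq : p.Coprime q) (h : IsBasisPair A B) :
    IsPrimitive ((List.range p).map fun j => if j * q % p < q % p then A else B).prod := by
  refine IsPrimitive.prod_of_shift 1 (fun j => by simp [add_mul]) ?_
  convert isPrimitive_prod_lt_sub_mod hp hpq h.symm using 4 with j
  have hlt := Nat.mod_lt q hp
  have hlt' := Nat.mod_lt (j * q) hp
  have key : (j + 1) * q % p < q % p ↔ ¬ j * q % p < p - q % p := by
    rw [add_mul, one_mul, Nat.add_mod_eq_ite]
    split_ifs <;> omega
  by_cases hj : j * q % p < p - q % p <;> simp [key, hj]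

lemma isPrimitive_prod_lt_one (hp : 2 ≤ p) (hpq : p.Coprime q) (h : IsBasisPair A B) :
    IsPrimitive ((List.range p).map fun j => if j * q % p < 1 then A else B).prod := by
  convert isPrimitive_prod_lt_mod (by omega) (Nat.coprime_one_right p) h using 5 with j
  rw [Nat.mod_eq_of_lt (show 1 < p by omega), Nat.lt_one_iff, Nat.lt_one_iff,
    ← Nat.dvd_iff_mod_eq_zero, ← Nat.dvd_iff_mod_eq_zero, hpq.dvd_mul_right, mul_one]

lemma isPrimitive_prod_lt_sub_one (hp : 2 ≤ p) (hpq : p.Coprime q) (h : IsBasisPair A B) :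
    IsPrimitive ((List.range p).map fun j => if j * q % p < p - 1 then A else B).prod := by
  obtain ⟨u, -, hu⟩ := Nat.exists_mul_mod_eq_one_of_coprime hpq.symm hp
  have lt_iff (i : ℕ) : i % p < p - 1 ↔ ¬ p ∣ i + 1 := by
    have hi := Nat.mod_lt i (show p > 0 by omega)
    have hadd := Nat.add_mod_eq_ite (m := i) (n := 1) (k := p)
    rw [Nat.mod_eq_of_lt (show 1 < p by omega)] at hadd
    rw [Nat.dvd_iff_mod_eq_zero]
    split_ifs at hadd <;> omega
  refine IsPrimitive.prod_of_shift (1 + (p - 1) * u) (fun j => by simp [add_mul]) ?_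
  convert isPrimitive_prod_lt_sub_mod (by omega) (Nat.coprime_one_right p) h using 5 with j
  rw [Nat.mod_eq_of_lt (show 1 < p by omega), lt_iff, lt_iff, mul_one, not_iff_not,
    ← hpq.dvd_mul_right (m := j + 1)]
  have hmod : (1 + (p - 1) * u) * q + 1 ≡ q [MOD p] := by
    have h₁ : (p - 1) * (q * u) + 1 ≡ (p - 1) * 1 + 1 [MOD p] := by
      refine Nat.ModEq.add_right 1 (Nat.ModEq.mul_left _ ?_)
      rw [Nat.ModEq, hu, Nat.mod_eq_of_lt (show 1 < p by omega)]
    have h₂ : (p - 1) * 1 + 1 ≡ 0 [MOD p] := by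
      rw [mul_one, Nat.sub_add_cancel (by omega)]
      simp [Nat.ModEq]
    calc (1 + (p - 1) * u) * q + 1 = q + ((p - 1) * (q * u) + 1) := by ring
      _ ≡ q + 0 [MOD p] := (h₁.trans h₂).add_left q
  have htotal : (j + (1 + (p - 1) * u)) * q + 1 ≡ (j + 1) * q [MOD p] := by
    calc (j + (1 + (p - 1) * u)) * q + 1 = j * q + ((1 + (p - 1) * u) * q + 1) := by ring
      _ ≡ j * q + q [MOD p] := hmod.add_left _
      _ = (j + 1) * q := by ring
  exact htotal.dvd_iff dvd_rfl

end Sufficiency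

lemma w_one_eq (p q r : ℕ) :
    w p q r 1 = ((List.range p).map fun j =>
      if j * q % p < r % p then xx * (xx ^ ((r / p : ℕ) : ℤ) * yy)
      else xx ^ ((r / p : ℕ) : ℤ) * yy).prod := by
  unfold w
  congr 2
  funext j
  split_ifs
  · rw [one_mul, Nat.cast_succ, add_comm, zpow_add, zpow_one, mul_assoc]
  · rw [one_mul]

/-- Residues of natural numbers congruent to the negative of one another. -/
lemma mod_eq_sub_mod_of_intModEq_neg {p r c : ℕ} (hc : c % p ≠ 0)
    (h : (r : ℤ) ≡ -(c : ℤ) [ZMOD (p : ℤ)]) : r % p = p - c % p := by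
  rcases Nat.eq_zero_or_pos p with rfl | hp
  · have := Int.modEq_zero_iff.1 h
    simp at hc
    omega
  have hr := Nat.mod_lt r hp
  have hlt := Nat.mod_lt c hp
  have hdvd : (p : ℤ) ∣ (r : ℤ) + c := by
    have := h.symm.dvd
    rwa [← neg_sub, dvd_neg, neg_sub_left, dvd_neg] at this
  have hdvd' : p ∣ r + c := by exact_mod_cast hdvd
  rw [Nat.dvd_iff_mod_eq_zero, Nat.add_mod_eq_ite] at hdvd'
  split_ifs at hdvd' <;> omega

lemma isPrimitive_w_one {p q r : ℕ} (hp : 2 ≤ p) (hpq : p.Coprime q)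
    (h : (r : ℤ) ≡ 1 [ZMOD (p : ℤ)] ∨ (r : ℤ) ≡ -1 [ZMOD (p : ℤ)] ∨
      (r : ℤ) ≡ (q : ℤ) [ZMOD (p : ℤ)] ∨ (r : ℤ) ≡ -(q : ℤ) [ZMOD (p : ℤ)]) :
    IsPrimitive (w p q r 1) := by
  have hbasis : IsBasisPair (xx * (xx ^ ((r / p : ℕ) : ℤ) * yy)) (xx ^ ((r / p : ℕ) : ℤ) * yy) := by
    have := IsBasisPair.generators.zpow_mul_mul_zpow ((r / p : ℕ) : ℤ) 0
    rw [zpow_zero, mul_one] at this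
    exact this.mul_left
  have hone : 1 % p = 1 := Nat.mod_eq_of_lt (by omega)
  rw [w_one_eq]
  rcases h with h | h | h | h
  · have hr : r % p = 1 := by
      rw [← hone]
      exact (Int.natCast_modEq_iff (b := 1)).1 (by exact_mod_cast h)
    rw [hr]
    exact isPrimitive_prod_lt_one hp hpq hbasis
  · rw [mod_eq_sub_mod_of_intModEq_neg (c := 1) (by omega) (by exact_mod_cast h), hone]
    exact isPrimitive_prod_lt_sub_one hp hpq hbasis
  · rw [show r % p = q % p from Int.natCast_modEq_iff.1 h]
    exact isPrimitive_prod_lt_mod (by omega) hpq hbasis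
  · have hq : q % p ≠ 0 := fun h0 => by
      have := Nat.eq_one_of_dvd_coprimes hpq dvd_rfl (Nat.dvd_of_mod_eq_zero h0)
      omega
    rw [mod_eq_sub_mod_of_intModEq_neg hq h]
    exact isPrimitive_prod_lt_sub_mod (by omega) hpq hbasis

section Necessity

lemma IsPrimitive.commute_of_map_eq_one {g : FreeGroup (Fin 2)} (hg : IsPrimitive g)
    {G : Type*} [Group G] (ρ : FreeGroup (Fin 2) →* G) (hρ : ρ g = 1) (a b : FreeGroup (Fin 2)) :
    Commute (ρ a) (ρ b) := by
  obtain ⟨φ, rfl⟩ := hg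
  have hmem (c : FreeGroup (Fin 2)) : ρ (φ c) ∈ Subgroup.zpowers (ρ (φ yy)) := by
    induction c using FreeGroup.induction_on with
    | C1 => simp
    | of i =>
      fin_cases i
      · exact hρ ▸ Subgroup.one_mem _
      · exact Subgroup.mem_zpowers _
    | inv_of i hi => simpa using hi
    | mul c d hc hd => simpa using Subgroup.mul_mem _ hc hd
  obtain ⟨i, hi⟩ := hmem (φ.symm a)
  obtain ⟨j, hj⟩ := hmem (φ.symm b)
  simp only [MulEquiv.apply_symm_apply] at hi hj
  rw [← hi, ← hj]
  exact (Commute.refl _).zpow_zpow i j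

/-- The word `∏_{j<n} x ^ (c j) y`. -/
def positiveWord (c : ℕ → ℤ) (n : ℕ) : FreeGroup (Fin 2) :=
  ((List.range n).map fun j => xx ^ c j * yy).prod

lemma positiveWord_succ (c : ℕ → ℤ) (n : ℕ) :
    positiveWord c (n + 1) = positiveWord c n * (xx ^ c n * yy) :=
  List.prod_range_succ _ _

/-- The height above the line through the endpoints, after `k` blocks, of the lattice path
described by `positiveWord c p`. -/
def height (c : ℕ → ℤ) (p k : ℕ) : ℤ :=
  p * ∑ i ∈ Finset.range k, c i - (∑ i ∈ Finset.range p, c i) * k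

lemma height_succ (c : ℕ → ℤ) (p k : ℕ) :
    height c p (k + 1) = height c p k + (p * c k - ∑ i ∈ Finset.range p, c i) := by
  simp only [height, Finset.sum_range_succ]
  push_cast
  ring

lemma height_zero (c : ℕ → ℤ) (p : ℕ) : height c p 0 = 0 := by simp [height]

lemma height_self (c : ℕ → ℤ) (p : ℕ) : height c p p = 0 := by
  simp only [height]
  ring

lemma isCoprime_of_isPrimitive {c : ℕ → ℤ} {p : ℕ} (h : IsPrimitive (positiveWord c p)) :
    IsCoprime (∑ i ∈ Finset.range p, c i) (p : ℤ) := by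
  obtain ⟨φ, hφ⟩ := h
  let ρ : FreeGroup (Fin 2) →* Multiplicative ℤ :=
    (FreeGroup.lift ![Multiplicative.ofAdd 1, 1]).comp φ.symm.toMonoidHom
  have key (n : ℕ) : (ρ (positiveWord c n)).toAdd =
      (ρ xx).toAdd * ∑ i ∈ Finset.range n, c i + (ρ yy).toAdd * n := by
    induction n with
    | zero => simp [positiveWord]
    | succ n ih =>
      rw [positiveWord_succ, map_mul, map_mul ρ, map_zpow, toAdd_mul, toAdd_mul, toAdd_zpow, ih,
        Finset.sum_range_succ]
      push_cast
      rw [smul_eq_mul]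
      ring
  have hone : (ρ (positiveWord c p)).toAdd = 1 := by
    simp [ρ, ← hφ, xx]
  exact ⟨_, _, (key p).symm.trans hone⟩

/-- The affine action of the free group on a ring in which `x` is multiplication by `u` and `y` is
`v ↦ t (v + 1)`. -/
def affineAction {R : Type*} [CommRing R] (u t : Rˣ) : FreeGroup (Fin 2) →* Equiv.Perm R :=
  FreeGroup.lift ![Units.mulLeft u, (Equiv.addRight (1 : R)).trans (Units.mulLeft t)]

section

variable {R : Type*} [CommRing R] (u t : Rˣ)

lemma affineAction_xx_zpow (k : ℤ) (v : R) :
    affineAction u t (xx ^ k) v = (u ^ k : Rˣ) * v := by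
  have h : affineAction u t xx = MulAction.toPermHom Rˣ R u := by
    ext v
    simp [affineAction, xx, Units.smul_def]
  rw [map_zpow, h, ← map_zpow]
  simp [Units.smul_def]

lemma affineAction_yy (v : R) : affineAction u t yy v = t * (v + 1) := by
  simp [affineAction, yy]

lemma affineAction_positiveWord (τ : Rˣ) (c : ℕ → ℤ) (p n : ℕ) (v : R) :
    affineAction (τ ^ (p : ℤ)) (τ ^ (-∑ i ∈ Finset.range p, c i)) (positiveWord c n) v =
      (τ ^ height c p n : Rˣ) * v + ∑ k ∈ Finset.range n, ((τ ^ height c p (k + 1) : Rˣ) : R) := by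
  induction n generalizing v with
  | zero => simp [positiveWord, height_zero]
  | succ n ih =>
    rw [positiveWord_succ, map_mul, map_mul, Equiv.Perm.mul_apply, Equiv.Perm.mul_apply, ih,
      affineAction_xx_zpow, affineAction_yy, Finset.sum_range_succ, height_succ, sub_eq_add_neg,
      zpow_add, zpow_add, zpow_mul]
    push_cast
    ring

end

lemma height_injOn {c : ℕ → ℤ} {p : ℕ} (h : IsCoprime (∑ i ∈ Finset.range p, c i) (p : ℤ)) :
    Set.InjOn (height c p) (Finset.range p) := by
  intro i hi j hj hij
  simp only [Finset.coe_range, Set.mem_Iio] at hi hj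
  have hdvd : (p : ℤ) ∣ (∑ i ∈ Finset.range p, c i) * ((i : ℤ) - j) := by
    refine ⟨∑ k ∈ Finset.range i, c k - ∑ k ∈ Finset.range j, c k, ?_⟩
    simp only [height] at hij
    linear_combination -hij
  have := Int.eq_zero_of_abs_lt_dvd (h.symm.dvd_of_dvd_mul_left hdvd)
    (by rw [abs_lt]; omega)
  omega

open Polynomial in
lemma natDegree_lt_of_dvd_X_pow_sub_one {p : ℕ} (hp : 0 < p) {D : ℤ[X]} (hD : D.eval 1 ≠ 0)
    (h : D ∣ X ^ p - 1) : D.natDegree < p := by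
  obtain ⟨Q, hQ⟩ := h
  have hne : (X ^ p - 1 : ℤ[X]) ≠ 0 := X_pow_sub_C_ne_zero hp 1
  have hdeg : (X ^ p - 1 : ℤ[X]).natDegree = p := natDegree_X_pow_sub_C (r := 1)
  rw [hQ] at hne hdeg
  rw [natDegree_mul (left_ne_zero_of_mul hne) (right_ne_zero_of_mul hne)] at hdeg
  by_contra! hlt
  have hQ0 : Q.natDegree = 0 := by omega
  have heval := congrArg (Polynomial.eval 1) hQ
  rw [eq_C_of_natDegree_eq_zero hQ0] at heval
  simp only [eval_sub, eval_pow, eval_X, one_pow, eval_one, sub_self, eval_mul, eval_C] at heval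
  have : Q.coeff 0 = 0 := (mul_eq_zero.1 heval.symm).resolve_left hD
  exact right_ne_zero_of_mul hne (by rw [eq_C_of_natDegree_eq_zero hQ0, this, C_0])

open Polynomial in
/-- The lattice path of a primitive positive word stays in a strip of minimal width. -/
theorem height_sub_height_lt {c : ℕ → ℤ} {p : ℕ} (h : IsPrimitive (positiveWord c p)) {i j : ℕ}
    (hi : i < p) (hj : j < p) : height c p i - height c p j < p := by
  have hp : 0 < p := by omega
  have hinj := height_injOn (isCoprime_of_isPrimitive h)
  obtain ⟨l, hl, hmin⟩ := Finset.exists_min_image (Finset.range p) (height c p) ⟨i, by simpa⟩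
  set L := height c p l with hL
  let e (k : ℕ) : ℕ := (height c p k - L).toNat
  have he (k) (hk : k < p) : (e k : ℤ) = height c p k - L := by
    have := hmin k (by simpa)
    exact Int.toNat_of_nonneg (by omega)
  let D : ℤ[X] := ∑ k ∈ Finset.range p, X ^ e k
  have hD1 : D.eval 1 = p := by simp [D, eval_finsetSum]
  have hD0 : D.coeff 0 = 1 := by
    simp only [D, finsetSum_coeff, coeff_X_pow]
    rw [Finset.sum_eq_single_of_mem l hl]
    · simp [e, hL]
    · intro k hk hkl
      have := he k (by simpa using hk)
      rw [if_neg]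
      intro h0
      exact hkl (hinj (by simpa using hk) (by simpa using hl) (by omega))
  have hroot : AdjoinRoot.mk D D = 0 := AdjoinRoot.mk_self
  have hunit : AdjoinRoot.root D * -AdjoinRoot.mk D D.divX = 1 := by
    have := congrArg (AdjoinRoot.mk D) (X_mul_divX_add D)
    rw [hroot, hD0, map_add, map_mul, AdjoinRoot.mk_X, C_1, map_one] at this
    linear_combination -this
  let τ : (AdjoinRoot D)ˣ := Units.mkOfMulEqOne _ _ hunit
  have hτ : (τ : AdjoinRoot D) = AdjoinRoot.root D := rfl
  have hsum : ∑ k ∈ Finset.range p, ((τ ^ height c p (k + 1) : (AdjoinRoot D)ˣ) : AdjoinRoot D)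
      = 0 := by
    have hcyc := Finset.sum_range_succ' (fun k =>
      ((τ ^ height c p k : (AdjoinRoot D)ˣ) : AdjoinRoot D)) p
    rw [Finset.sum_range_succ, height_self, height_zero] at hcyc
    rw [← add_right_cancel hcyc]
    calc _ = ∑ k ∈ Finset.range p, ((τ ^ L : (AdjoinRoot D)ˣ) : AdjoinRoot D) *
          AdjoinRoot.mk D (X ^ e k) := by
          refine Finset.sum_congr rfl fun k hk => ?_
          rw [map_pow, AdjoinRoot.mk_X, ← hτ, ← Units.val_pow_eq_pow_val, ← zpow_natCast,
            ← Units.val_mul, ← zpow_add, he k (by simpa using hk), add_sub_cancel]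
      _ = 0 := by rw [← Finset.mul_sum, ← map_sum, hroot, mul_zero]
  have hone : affineAction (τ ^ (p : ℤ)) (τ ^ (-∑ i ∈ Finset.range p, c i)) (positiveWord c p)
      = 1 := by
    ext v
    rw [affineAction_positiveWord, hsum, height_self]
    simp
  have hcomm := DFunLike.congr_fun (h.commute_of_map_eq_one _ hone xx yy).eq 0
  have hx (v) := affineAction_xx_zpow (τ ^ (p : ℤ)) (τ ^ (-∑ i ∈ Finset.range p, c i)) 1 v
  simp only [zpow_one] at hx
  rw [Equiv.Perm.mul_apply, Equiv.Perm.mul_apply, hx, hx, affineAction_yy, affineAction_yy,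
    mul_zero, zero_add, mul_one, ← Units.val_mul, Units.val_inj, mul_eq_right] at hcomm
  have hdvd : D ∣ X ^ p - 1 := by
    rw [← AdjoinRoot.mk_eq_zero, map_sub, map_pow, AdjoinRoot.mk_X, map_one, ← hτ, sub_eq_zero]
    simpa using congrArg Units.val hcomm
  have hdeg := natDegree_lt_of_dvd_X_pow_sub_one hp (by simp [hD1]; omega) hdvd
  have hcoeff : D.coeff (e i) ≠ 0 := by
    refine ne_of_gt ?_
    simp only [D, finsetSum_coeff, coeff_X_pow]
    exact Finset.sum_pos' (fun k _ => by positivity) ⟨i, by simpa, by simp⟩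
  have := le_natDegree_of_ne_zero hcoeff
  have := he i hi
  have := hmin j (by simpa)
  omega

end Necessity

section Intervals

lemma eq_one_of_unique_exit {p ρ β : ℤ} (hρ : 2 ≤ ρ) (hρp : ρ + 2 ≤ p) (hβ : 1 ≤ β)
    (hβp : 2 * β ≤ p)
    (h : ∀ v v', 0 ≤ v → v < ρ → 0 ≤ v' → v' < ρ → ρ ≤ (v + β) % p → ρ ≤ (v' + β) % p → v = v') :
    β = 1 := by
  by_contra hne
  rcases lt_or_ge (ρ - 1 + β) p with hlt | hge
  · have := h (ρ - 1) (ρ - 2) (by omega) (by omega) (by omega) (by omega)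
      (by rw [Int.emod_eq_of_lt] <;> omega) (by rw [Int.emod_eq_of_lt] <;> omega)
    omega
  · have := h (p - 1 - β) (p - 2 - β) (by omega) (by omega) (by omega) (by omega)
      (by rw [Int.emod_eq_of_lt] <;> omega) (by rw [Int.emod_eq_of_lt] <;> omega)
    omega

/-- An affine bijection of `ℤ/p` that preserves an interval of length `ρ`, with
`2 ≤ ρ ≤ p - 2`, has slope `± 1`. -/
lemma modEq_or_modEq_neg_of_interval {p q ρ g : ℤ} (hρ : 2 ≤ ρ) (hρp : ρ + 2 ≤ p)
    (hq : IsCoprime q p) (hco : IsCoprime ρ p)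
    (h : ∀ k : ℤ, k * q % p < ρ ↔ (g - k * ρ) % p < ρ) :
    ρ ≡ q [ZMOD p] ∨ ρ ≡ -q [ZMOD p] := by
  have hp : 0 < p := by omega
  obtain ⟨s, s', hs⟩ := id hq
  obtain ⟨d, d', hd⟩ := id hco
  have main (σ β : ℤ) (hσ : σ = 1 ∨ σ = -1) (hβσ : β ≡ σ * (d * q) [ZMOD p]) (hβ : 1 ≤ β)
      (hβp : 2 * β ≤ p) : ρ ≡ σ * q [ZMOD p] := by
    have hexit (v : ℤ) (hv0 : 0 ≤ v) (hv : v < ρ) (hvβ : ρ ≤ (v + β) % p) :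
        (g - v * s * ρ) % p = if σ = 1 then 0 else ρ - 1 := by
      have h₁ : (v * s * q) % p = v := by
        have : v * s * q ≡ v [ZMOD p] :=
          Int.modEq_iff_dvd.2 ⟨v * s', by linear_combination (-v) * hs⟩
        exact Eq.trans this (Int.emod_eq_of_lt hv0 (by omega))
      have h₂ : ((v * s + σ * d) * q) % p = (v + β) % p := by
        have : (v * s + σ * d) * q ≡ v + σ * (d * q) [ZMOD p] :=
          Int.modEq_iff_dvd.2 ⟨v * s', by linear_combination (-v) * hs⟩
        exact this.trans (hβσ.symm.add_left v)
      have h₃ := (h (v * s)).1 (by omega)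
      have h₄ := (not_congr (h (v * s + σ * d))).1 (by omega)
      have h₅ : (g - (v * s + σ * d) * ρ) % p = ((g - v * s * ρ) % p - σ) % p := by
        have : g - (v * s + σ * d) * ρ ≡ g - v * s * ρ - σ [ZMOD p] :=
          Int.modEq_iff_dvd.2 ⟨-σ * d', by linear_combination σ * hd⟩
        exact this.trans ((Int.mod_modEq _ _).symm.sub_right σ)
      rw [h₅] at h₄
      have h₆ := Int.emod_nonneg (g - v * s * ρ) hp.ne'
      generalize (g - v * s * ρ) % p = u at *
      rcases hσ with rfl | rfl
      · rw [if_pos rfl]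
        by_contra hu
        rw [Int.emod_eq_of_lt (by omega) (by omega)] at h₄
        omega
      · rw [if_neg (by norm_num)]
        rw [Int.emod_eq_of_lt (by omega) (by omega)] at h₄
        omega
    have hβ1 : β = 1 := by
      refine eq_one_of_unique_exit hρ hρp hβ hβp fun v v' hv0 hv hv0' hv' hvβ hvβ' => ?_
      have heq := (hexit v hv0 hv hvβ).trans (hexit v' hv0' hv' hvβ').symm
      have hdvd : p ∣ s * ρ * (v - v') := by
        have := (Int.ModEq.symm heq).dvd
        rwa [show g - v * s * ρ - (g - v' * s * ρ) = -(s * ρ * (v - v')) by ring, dvd_neg] at this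
      have hs' : IsCoprime s p := ⟨q, s', by linear_combination hs⟩
      have := Int.eq_zero_of_abs_lt_dvd ((hs'.mul_left hco).symm.dvd_of_dvd_mul_left hdvd)
        (by rw [abs_lt]; omega)
      omega
    rw [hβ1] at hβσ
    calc ρ = 1 * ρ := (one_mul ρ).symm
      _ ≡ σ * (d * q) * ρ [ZMOD p] := hβσ.mul_right ρ
      _ ≡ σ * q [ZMOD p] :=
        Int.modEq_iff_dvd.2 ⟨σ * q * d', by linear_combination (-σ * q) * hd⟩
  have hb0 := Int.emod_nonneg (d * q) hp.ne'
  have hbp := Int.emod_lt_of_pos (d * q) hp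
  have hb : d * q % p ≠ 0 := by
    intro h0
    have hd' : IsCoprime d p := ⟨ρ, d', by linear_combination hd⟩
    have := Int.eq_one_of_dvd_one hp.le
      (isCoprime_self.1 ((hd'.mul_left hq).of_isCoprime_of_dvd_left (Int.dvd_of_emod_eq_zero h0))).dvd
    omega
  rcases le_or_gt (2 * (d * q % p)) p with hle | hgt
  · left
    simpa using main 1 (d * q % p) (.inl rfl) (by simpa using Int.mod_modEq _ _) (by omega) hle
  · right
    refine (main (-1) (p - d * q % p) (.inr rfl) ?_ (by omega) (by omega)).trans (by simp)
    calc p - d * q % p ≡ p - d * q [ZMOD p] := (Int.mod_modEq _ _).sub_left p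
      _ ≡ -1 * (d * q) [ZMOD p] := Int.modEq_iff_dvd.2 ⟨-1, by ring⟩

end Intervals

/-- The exponent `e_j` in the definition of `w`. -/
def blockExponent (p q r j : ℕ) : ℕ := if j * q % p < r % p then r / p + 1 else r / p

lemma w_eq_positiveWord (p q r : ℕ) (m : ℤ) :
    w p q r m = positiveWord (fun j => m * (blockExponent p q r j : ℤ)) p := rfl

lemma sum_blockExponent {p q : ℕ} (hp : 0 < p) (hpq : p.Coprime q) (r : ℕ) :
    ∑ j ∈ Finset.range p, blockExponent p q r j = r := by
  have hmaps : Set.MapsTo (fun j => j * q % p) (Finset.range p) (Finset.range p) := fun j _ => by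
    simpa using Nat.mod_lt _ hp
  have hinj : Set.InjOn (fun j => j * q % p) (Finset.range p) := fun i hi j hj hij => by
    have : i ≡ j [MOD p] := Nat.ModEq.cancel_right_of_coprime hpq hij
    exact this.eq_of_lt_of_lt (by simpa using hi) (by simpa using hj)
  have hperm : ∑ j ∈ Finset.range p, blockExponent p q r j =
      ∑ i ∈ Finset.range p, (r / p + if i < r % p then 1 else 0) := by
    refine Finset.sum_nbij (fun j => j * q % p) hmaps hinj
      (Finset.surjOn_of_injOn_of_card_le _ hmaps hinj le_rfl) fun j _ => ?_
    simp only [blockExponent]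
    split_ifs <;> rfl
  have hfilter : (Finset.range p).filter (· < r % p) = Finset.range (r % p) := by
    ext i
    have := Nat.mod_lt r hp
    simp only [Finset.mem_filter, Finset.mem_range]
    omega
  rw [hperm, Finset.sum_add_distrib, ← Finset.card_filter, hfilter]
  simpa using Nat.div_add_mod r p

lemma eq_one_and_modEq_of_isPrimitive_w {p q r : ℕ} {m : ℤ} (hp : 2 ≤ p) (hpq : p.Coprime q)
    (hm : 1 ≤ m) (h : IsPrimitive (w p q r m)) :
    m = 1 ∧
      ((r : ℤ) ≡ 1 [ZMOD (p : ℤ)] ∨ (r : ℤ) ≡ -1 [ZMOD (p : ℤ)] ∨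
       (r : ℤ) ≡ (q : ℤ) [ZMOD (p : ℤ)] ∨ (r : ℤ) ≡ -(q : ℤ) [ZMOD (p : ℤ)]) := by
  have hp0 : 0 < p := by omega
  rw [w_eq_positiveWord] at h
  set c : ℕ → ℤ := fun j => m * (blockExponent p q r j : ℤ) with hc
  have hsum : ∑ i ∈ Finset.range p, c i = m * r := by
    simp only [hc]
    rw [← Finset.mul_sum, ← Nat.cast_sum, sum_blockExponent hp0 hpq]
  have hco := isCoprime_of_isPrimitive h
  have hinj := height_injOn hco
  rw [hsum] at hco
  obtain ⟨l, hl, hmin⟩ := Finset.exists_min_image (Finset.range p) (height c p) ⟨0, by simpa⟩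
  rw [Finset.mem_range] at hl
  set L := height c p l with hL
  have hlow (k : ℕ) (hk : k < p) : L ≤ height c p k := hmin k (by simpa)
  have hupp (k : ℕ) (hk : k < p) : height c p k < L + p := by
    have := height_sub_height_lt h hk hl
    omega
  obtain rfl : m = 1 := by
    have himage : (Finset.range p).image (height c p) = Finset.Ico L (L + p) := by
      refine Finset.eq_of_subset_of_card_le (fun a ha => ?_) ?_
      · obtain ⟨k, hk, rfl⟩ := Finset.mem_image.1 ha
        rw [Finset.mem_range] at hk
        exact Finset.mem_Ico.2 ⟨hlow k hk, hupp k hk⟩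
      · rw [Finset.card_image_of_injOn hinj]
        simp
    have hmdvd (k : ℕ) : m ∣ height c p k := by
      have hmc (n : ℕ) : m ∣ ∑ i ∈ Finset.range n, c i :=
        Finset.dvd_sum fun i _ => dvd_mul_right _ _
      exact dvd_sub ((hmc k).mul_left _) ((hmc p).mul_right _)
    have hmem : L + 1 ∈ (Finset.range p).image (height c p) := by
      rw [himage, Finset.mem_Ico]
      omega
    obtain ⟨k, -, hk⟩ := Finset.mem_image.1 hmem
    have h₁ : m ∣ (L + 1) - L := dvd_sub (hk ▸ hmdvd k) (hmdvd l)
    rw [add_sub_cancel_left] at h₁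
    exact Int.eq_one_of_dvd_one (by omega) h₁
  refine ⟨rfl, ?_⟩
  rw [one_mul] at hsum hco
  have hrlt := Nat.mod_lt r hp0
  have hr : (r : ℤ) = p * (r / p : ℕ) + (r % p : ℕ) := by exact_mod_cast (Nat.div_add_mod r p).symm
  have hrmod : (r : ℤ) ≡ (r % p : ℕ) [ZMOD p] := by
    rw [Int.natCast_mod]
    exact (Int.mod_modEq _ _).symm
  have hcoρ : IsCoprime ((r % p : ℕ) : ℤ) (p : ℤ) := by
    rw [hr] at hco
    simpa using hco
  have hcase : r % p = 0 ∨ r % p = 1 ∨ r % p = p - 1 ∨ (2 ≤ r % p ∧ r % p + 2 ≤ p) := by omega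
  rcases hcase with h0 | h1 | h1 | ⟨hρ, hρp⟩
  · rw [h0, Nat.cast_zero, isCoprime_zero_left, Int.isUnit_iff] at hcoρ
    omega
  · left
    simpa [h1] using hrmod
  · right
    left
    refine hrmod.trans (Int.modEq_iff_dvd.2 ⟨-1, ?_⟩)
    rw [h1]
    push_cast [show 1 ≤ p by omega]
    ring
  · right
    right
    have hblock (k : ℕ) (hk : k < p) : k * q % p < r % p ↔ height c p k - L < (r % p : ℕ) := by
      have hnext : L ≤ height c p (k + 1) ∧ height c p (k + 1) < L + p := by
        rcases Nat.lt_or_ge (k + 1) p with hk' | hk'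
        · exact ⟨hlow _ hk', hupp _ hk'⟩
        · rw [show k + 1 = p by omega, height_self, ← height_zero c p]
          exact ⟨hlow _ hp0, hupp _ hp0⟩
      rw [height_succ, hsum] at hnext
      have hck : c k = if k * q % p < r % p then ((r / p : ℕ) : ℤ) + 1 else (r / p : ℕ) := by
        simp only [hc, blockExponent, one_mul]
        split_ifs <;> push_cast <;> rfl
      split_ifs at hck with hlt
      · have : p * c k - r = p - (r % p : ℕ) := by
          rw [hck]
          linear_combination -hr
        simp only [hlt, true_iff]
        omega
      · have : p * c k - r = -(r % p : ℕ) := by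
          rw [hck]
          linear_combination -hr
        simp only [hlt, false_iff]
        omega
    have hint (k : ℤ) : k * q % p < (r % p : ℕ) ↔ (-L - k * (r % p : ℕ)) % p < (r % p : ℕ) := by
      have hk0 := Int.emod_nonneg k (show (p : ℤ) ≠ 0 by omega)
      have hkp := Int.emod_lt_of_pos k (show (0 : ℤ) < p by omega)
      obtain ⟨i, hi⟩ := Int.eq_ofNat_of_zero_le hk0
      have hip : i < p := by omega
      have hki : k ≡ i [ZMOD p] := by
        rw [← hi]
        exact (Int.mod_modEq _ _).symm
      have h₁ : k * q % p = ((i * q % p : ℕ) : ℤ) := by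
        push_cast
        exact hki.mul_right _
      have h₂ : (-L - k * (r % p : ℕ)) % p = height c p i - L := by
        rw [← Int.emod_eq_of_lt (sub_nonneg.2 (hlow i hip))
          (show height c p i - L < p by linarith [hupp i hip])]
        calc -L - k * (r % p : ℕ) ≡ -L - i * r [ZMOD p] :=
              (hki.mul hrmod.symm).sub_left _
          _ ≡ height c p i - L [ZMOD p] := by
              refine Int.modEq_iff_dvd.2 ⟨∑ j ∈ Finset.range i, c j, ?_⟩
              rw [height, hsum]
              ring
      rw [h₁, h₂, ← hblock i hip]
      exact Nat.cast_lt
    have := modEq_or_modEq_neg_of_interval (by exact_mod_cast hρ) (by exact_mod_cast hρp)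
      (Nat.isCoprime_iff_coprime.2 hpq.symm) hcoρ hint
    exact this.imp hrmod.trans hrmod.trans

/-- Theorem (primitivity criterion for twisted torus knot words):
for coprime `p ≥ 1`, `q ≥ 1`, `r ≥ 0`, `m ≥ 1`, the word `w_{p,q,r,m}` is
primitive iff `p = 1`, or `m = 1` and `r ≡ ±1` or `±q (mod p)`. -/
theorem stmt0 (p q r : ℕ) (m : ℤ) (hp : 1 ≤ p) (hq : 1 ≤ q)
    (hpq : Nat.Coprime p q) (hm : 1 ≤ m) :
    IsPrimitive (w p q r m) ↔
      p = 1 ∨ (m = 1 ∧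
        ((r : ℤ) ≡ 1 [ZMOD (p : ℤ)] ∨ (r : ℤ) ≡ -1 [ZMOD (p : ℤ)] ∨
         (r : ℤ) ≡ (q : ℤ) [ZMOD (p : ℤ)] ∨ (r : ℤ) ≡ -(q : ℤ) [ZMOD (p : ℤ)])) := by
  rcases Nat.lt_or_ge p 2 with hp2 | hp2
  · obtain rfl : p = 1 := by omega
    simp only [true_or, iff_true]
    have := (IsBasisPair.generators.zpow_mul_mul_zpow (m * r) 0).symm.isPrimitive
    simpa [w, Nat.mod_one] using this
  · refine ⟨fun h => .inr (eq_one_and_modEq_of_isPrimitive_w hp2 hpq hm h), ?_⟩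
    rintro (h | ⟨rfl, h⟩)
    · omega
    · exact isPrimitive_w_one hp2 hpq h
end

section
/- Let p ≥ 1 be an integer, r ≥ 0 and m integers, and let q, q' ≥ 1 be integers with gcd(p,q) = gcd(p,q') = 1 such that q ≡ q' (mod p) or q ≡ −q' (mod p). Then there is an automorphism of the free group F mapping w_{p,q,r,m} to w_{p,q',r,m}. -/
/-- Shifting a `p`-periodic sequence in a group conjugates the product of one period. -/
theorem isConj_prod_range_shift {G : Type*} [Group G] (p : ℕ) (g : ℕ → G)
    (hg : ∀ j, g (j + p) = g j) (t : ℕ) :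
    IsConj ((List.range p).map g).prod ((List.range p).map fun j => g (j + t)).prod := by
  induction t with
  | zero => exact IsConj.refl _
  | succ t ih =>
    refine ih.trans (isConj_iff.mpr ⟨(g t)⁻¹, ?_⟩)
    have h₁ := List.prod_range_succ (fun j => g (j + t)) p
    have h₂ := List.prod_range_succ' (fun j => g (j + t)) p
    rw [h₁] at h₂
    simp only [zero_add, Nat.add_comm p t, hg] at h₂
    rw [inv_inv, mul_assoc, h₂, inv_mul_cancel_left]
    simp only [Nat.succ_eq_add_one, Nat.add_assoc, Nat.add_comm 1 t]

/-- The reflection `a ↦ s - 1 - a` of `ℤ/p` preserves the residues smaller than `s`. -/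
theorem lt_iff_lt_of_dvd_add_sub {p s a b : ℕ} (ha : a < p) (hb : b < p)
    (h : (p : ℤ) ∣ a + b + 1 - s) : a < s ↔ b < s := by
  obtain ⟨k, hk⟩ := h
  have hp : (0 : ℤ) < p := by omega
  have h₀ : 0 < k → (p : ℤ) ≤ p * k := fun hk₀ => by nlinarith
  have h₁ : k ≤ 0 → (p : ℤ) * k ≤ 0 := fun hk₀ => by nlinarith
  rcases le_or_gt k 0 with hk₀ | hk₀
  · have := h₁ hk₀
    omega
  · have := h₀ hk₀
    omega

/-- If `q ≡ ±q' (mod p)` then `w_{p,q,r,m}` and `w_{p,q',r,m}` are equivalent,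
i.e. some automorphism of the free group maps one to the other. -/
theorem stmt1 (p r : ℕ) (m : ℤ) (q q' : ℕ) (hp : 1 ≤ p)
    (hq : 1 ≤ q) (hq' : 1 ≤ q')
    (hpq : Nat.Coprime p q) (hpq' : Nat.Coprime p q')
    (hcong : (q : ℤ) ≡ (q' : ℤ) [ZMOD (p : ℤ)] ∨ (q : ℤ) ≡ -(q' : ℤ) [ZMOD (p : ℤ)]) :
    ∃ φ : FreeGroup (Fin 2) ≃* FreeGroup (Fin 2), φ (w p q r m) = w p q' r m := by
  rcases hcong with h | h
  · have h' : q ≡ q' [MOD p] := Int.natCast_modEq_iff.mp h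
    refine ⟨MulEquiv.refl _, ?_⟩
    have hj (j : ℕ) : j * q % p = j * q' % p := h'.mul_left j
    simp only [w, hj, MulEquiv.refl_apply]
  · have : NeZero p := ⟨by omega⟩
    have hsum : (q : ZMod p) + q' = 0 := by
      have := (ZMod.intCast_eq_intCast_iff _ _ p).mpr h
      push_cast at this
      rw [this, neg_add_cancel]
    obtain ⟨t, ht⟩ : ∃ t : ℕ, (t : ZMod p) * q = (r % p : ℕ) - 1 := by
      refine ⟨(((r % p : ℕ) - 1) * (q : ZMod p)⁻¹ : ZMod p).val, ?_⟩
      rw [ZMod.natCast_zmod_val, mul_assoc, mul_comm _ (q : ZMod p),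
        ZMod.coe_mul_inv_eq_one q hpq.symm, mul_one]
    have hshift (j : ℕ) : (j + t) * q % p < r % p ↔ j * q' % p < r % p := by
      refine lt_iff_lt_of_dvd_add_sub (Nat.mod_lt _ hp) (Nat.mod_lt _ hp) ?_
      rw [← ZMod.intCast_zmod_eq_zero_iff_dvd _ p]
      simp only [Int.cast_sub, Int.cast_add, Int.cast_natCast, Int.cast_one, ZMod.natCast_mod]
      rw [ZMod.natCast_mod] at ht
      push_cast
      linear_combination (j : ZMod p) * hsum + ht
    have hconj := isConj_prod_range_shift p (fun j => xx ^ (m *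
      ((if j * q % p < r % p then r / p + 1 else r / p : ℕ) : ℤ)) * yy)
      (fun j => by simp only [add_mul, Nat.add_mul_mod_self_left]) t
    simp only [hshift] at hconj
    obtain ⟨c, hc⟩ := isConj_iff.mp hconj
    exact ⟨MulAut.conj c, hc⟩
end

section
/- Let p ≥ 2 and q ≥ 1 be coprime integers, let r ≥ 1 be an integer, and let m ≥ 2. Then w_{p,q,r,m} is not a primitive element of the free group F. -/
/-- If a homomorphism kills a primitive element, its image is cyclic, so the images of the two
generators commute. -/
theorem IsPrimitive.commute_map {G : Type*} [Group G] {g : FreeGroup (Fin 2)}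
    (hg : IsPrimitive g) (f : FreeGroup (Fin 2) →* G) (hf : f g = 1) :
    Commute (f xx) (f yy) := by
  obtain ⟨φ, rfl⟩ := hg
  have key : ∀ u : FreeGroup (Fin 2), f (φ u) ∈ Subgroup.zpowers (f (φ yy)) := by
    intro u
    induction u using FreeGroup.induction_on with
    | C1 => simp
    | of i =>
      fin_cases i
      · exact (show f (φ (FreeGroup.of 0)) = 1 from hf) ▸ Subgroup.one_mem _
      · exact Subgroup.mem_zpowers _
    | inv_of i h => simpa using h
    | mul u v hu hv => simpa using Subgroup.mul_mem _ hu hv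
  obtain ⟨k, hk⟩ := Subgroup.mem_zpowers_iff.mp (by simpa using key (φ.symm xx))
  obtain ⟨l, hl⟩ := Subgroup.mem_zpowers_iff.mp (by simpa using key (φ.symm yy))
  rw [← hk, ← hl]
  exact Commute.zpow_zpow (Commute.refl _) k l

/-- The word `w p q r m` dies in every group where `x ^ m` and `y ^ p` die. -/
theorem map_w_eq_one {G : Type*} [Group G] (f : FreeGroup (Fin 2) →* G) (p q r : ℕ) (m : ℤ)
    (hx : f xx ^ m = 1) (hy : f yy ^ p = 1) : f (w p q r m) = 1 := by
  simp only [w, map_list_prod, List.map_map, Function.comp_def, map_mul, map_zpow, zpow_mul, hx,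
    one_zpow, one_mul, List.map_const', List.prod_replicate, List.length_range, hy]

/-- The permutation of `ZMod n × ZMod p` translating the fibre over `0` by one. -/
def fibreShift (n p : ℕ) : Equiv.Perm (ZMod n × ZMod p) where
  toFun z := (if z.2 = 0 then z.1 + 1 else z.1, z.2)
  invFun z := (if z.2 = 0 then z.1 - 1 else z.1, z.2)
  left_inv z := by by_cases h : z.2 = 0 <;> simp [h, Prod.ext_iff]
  right_inv z := by by_cases h : z.2 = 0 <;> simp [h, Prod.ext_iff]

/-- The permutation of `ZMod n × ZMod p` translating the base by one. -/
def baseShift (n p : ℕ) : Equiv.Perm (ZMod n × ZMod p) :=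
  Equiv.prodCongr (Equiv.refl _) (Equiv.addRight 1)

theorem fibreShift_pow_apply (n p k : ℕ) (z : ZMod n × ZMod p) :
    (fibreShift n p ^ k) z = (if z.2 = 0 then z.1 + k else z.1, z.2) := by
  induction k with
  | zero => simp
  | succ k ih =>
    rw [pow_succ', Equiv.Perm.mul_apply, ih]
    by_cases h : z.2 = 0 <;> simp [fibreShift, h, add_assoc]

theorem baseShift_pow_apply (n p k : ℕ) (z : ZMod n × ZMod p) :
    (baseShift n p ^ k) z = (z.1, z.2 + k) := by
  induction k with
  | zero => simp
  | succ k ih =>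
    rw [pow_succ', Equiv.Perm.mul_apply, ih]
    simp [baseShift, add_assoc]

theorem fibreShift_pow_self (n p : ℕ) : fibreShift n p ^ n = 1 := by
  ext1 z
  simp [fibreShift_pow_apply]

theorem baseShift_pow_self (n p : ℕ) : baseShift n p ^ p = 1 := by
  ext1 z
  simp [baseShift_pow_apply]

theorem not_commute_fibreShift_baseShift {n p : ℕ} (hn : 2 ≤ n) (hp : 2 ≤ p) :
    ¬ Commute (fibreShift n p) (baseShift n p) := by
  intro h
  have : Fact (1 < n) := ⟨hn⟩
  have : Fact (1 < p) := ⟨hp⟩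
  simpa [fibreShift, baseShift] using congrArg Prod.fst (Equiv.congr_fun h.eq (0, 0))

/-- For `p ≥ 2`, `q ≥ 1` coprime, `r ≥ 1`, and `m ≥ 2`, the word
`w_{p,q,r,m}` is not primitive. -/
theorem stmt3 (p q r : ℕ) (m : ℤ) (hp : 2 ≤ p) (hq : 1 ≤ q)
    (hpq : Nat.Coprime p q) (hr : 1 ≤ r) (hm : 2 ≤ m) :
    ¬ IsPrimitive (w p q r m) := by
  intro hw
  lift m to ℕ using by lia with n
  let f : FreeGroup (Fin 2) →* Equiv.Perm (ZMod n × ZMod p) :=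
    FreeGroup.lift ![fibreShift n p, baseShift n p]
  have hx : f xx = fibreShift n p := by simp [f, xx]
  have hy : f yy = baseShift n p := by simp [f, yy]
  have hcomm := hw.commute_map f (map_w_eq_one f p q r n
    (by rw [hx, zpow_natCast, fibreShift_pow_self]) (by rw [hy, baseShift_pow_self]))
  rw [hx, hy] at hcomm
  exact not_commute_fibreShift_baseShift (by exact_mod_cast hm) hp hcomm
end

section
/- Let p and q be coprime integers with 1 < q < p/2, and let r be an integer with q < r < p − q. Then w_{p,q,r,1} is not a primitive element of the free group F. -/
open LaurentPolynomial in
/-- A Laurent polynomial dividing `T (-s) - 1` has width at most `s`. -/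
theorem width_le_of_mul_eq {P R : ℤ[T;T⁻¹]} {s : ℕ} (hs : 0 < s)
    (h : P * R = T (-(s : ℤ)) - 1) {m n : ℤ} (hm : P.coeff m ≠ 0) (hn : P.coeff n ≠ 0) :
    n - m ≤ s := by
  obtain ⟨i, f, hf⟩ := P.exists_T_pow
  obtain ⟨j, g, hg⟩ := R.exists_T_pow
  have hfg : f * g * Polynomial.X ^ s = (1 - Polynomial.X ^ s) * Polynomial.X ^ (i + j) := by
    apply Polynomial.toLaurent_injective
    simp only [map_mul, map_sub, Polynomial.toLaurent_X_pow, hf, hg, Polynomial.toLaurent_one]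
    calc P * T i * (R * T j) * T s = P * R * T s * (T i * T j) := by ring
      _ = _ := by
        rw [h, sub_mul, ← T_add, neg_add_cancel, T_zero, ← T_add, one_mul, Nat.cast_add]
  have hcoeff : ∀ k : ℤ, P.coeff k ≠ 0 → ∃ l : ℕ, (l : ℤ) = k + i ∧ f.coeff l ≠ 0 := by
    intro k hk
    have hval : (Polynomial.toLaurent f).coeff (k + i) ≠ 0 := by
      rw [hf, T, AddMonoidAlgebra.coeff_mul_single_add, mul_one]
      exact hk
    rw [← Finsupp.mem_support_iff, support_coeff_toLaurent, Finset.mem_map] at hval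
    obtain ⟨l, hl, hlk⟩ := hval
    exact ⟨l, hlk, Polynomial.mem_support_iff.1 hl⟩
  obtain ⟨a, ha, hfa⟩ := hcoeff m hm
  obtain ⟨b, hb, hfb⟩ := hcoeff n hn
  have hone : (1 - Polynomial.X ^ s : Polynomial ℤ).coeff 0 = 1 := by
    simp [Polynomial.coeff_X_pow, hs.ne]
  have hone_ne : (1 - Polynomial.X ^ s : Polynomial ℤ) ≠ 0 := by
    intro h0
    simp [h0] at hone
  have hf0 : f ≠ 0 := by
    rintro rfl
    simp at hfa
  have hg0 : g ≠ 0 := by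
    rintro rfl
    have := mul_ne_zero hone_ne (pow_ne_zero (i + j) (Polynomial.X_ne_zero (R := ℤ)))
    rw [← hfg] at this
    simp at this
  have hdeg := congrArg Polynomial.natDegree hfg
  have htrail := congrArg Polynomial.natTrailingDegree hfg
  have hX : ∀ k, (Polynomial.X ^ k : Polynomial ℤ) ≠ 0 := fun k => pow_ne_zero _ Polynomial.X_ne_zero
  rw [Polynomial.natDegree_mul (mul_ne_zero hf0 hg0) (hX _), Polynomial.natDegree_mul hf0 hg0,
    Polynomial.natDegree_mul hone_ne (hX _), Polynomial.natDegree_X_pow,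
    Polynomial.natDegree_X_pow] at hdeg
  rw [Polynomial.natTrailingDegree_mul (mul_ne_zero hf0 hg0) (hX _),
    Polynomial.natTrailingDegree_mul hf0 hg0, Polynomial.natTrailingDegree_mul hone_ne (hX _),
    Polynomial.natTrailingDegree_X_pow, Polynomial.natTrailingDegree_X_pow] at htrail
  have hone_deg : (1 - Polynomial.X ^ s : Polynomial ℤ).natDegree ≤ s :=
    (Polynomial.natDegree_sub_le _ _).trans (by simp)
  have hfa' := Polynomial.natTrailingDegree_le_of_ne_zero hfa
  have hfb' := Polynomial.le_natDegree_of_ne_zero hfb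
  have hgg := Polynomial.natTrailingDegree_le_natDegree g
  omega

open LaurentPolynomial in
/-- The coefficient of a sum of monomials at the exponent of one of them is nonzero. -/
theorem coeff_sum_T_ne_zero {ι : Type*} (s : Finset ι) (h : ι → ℤ) {j : ι} (hj : j ∈ s) :
    (∑ i ∈ s, (T (h i) : ℤ[T;T⁻¹])).coeff (h j) ≠ 0 := by
  rw [AddMonoidAlgebra.coeff_sum, Finsupp.finsetSum_apply]
  refine (Finset.sum_pos' (fun i _ => ?_) ⟨j, hj, ?_⟩).ne'
  · rw [T_apply]
    split_ifs <;> simp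
  · simp

open LaurentPolynomial in
/-- A character `ψ` of the free group killing a primitive element `φ xx` admits a
`ψ`-twisted derivation taking the value `1` on that element. -/
theorem exists_derivation (φ : FreeGroup (Fin 2) ≃* FreeGroup (Fin 2))
    (ψ : FreeGroup (Fin 2) →* Multiplicative ℤ) (h : ψ (φ xx) = 1) :
    ∃ D : FreeGroup (Fin 2) → ℤ[T;T⁻¹],
      (∀ a b, D (a * b) = D a + T (ψ a).toAdd * D b) ∧ D (φ xx) = 1 := by
  let scale (k : ℤ) : Equiv.Perm ℤ[T;T⁻¹] :=
    { toFun := fun z => T k * z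
      invFun := fun z => T (-k) * z
      left_inv := fun z => by simp [← mul_assoc]
      right_inv := fun z => by simp [← mul_assoc] }
  let ρ : FreeGroup (Fin 2) →* Equiv.Perm ℤ[T;T⁻¹] :=
    FreeGroup.lift ![Equiv.addRight 1, scale (ψ (φ yy)).toAdd]
  have hρx : ∀ z, ρ xx z = z + 1 := fun z => by simp [ρ, xx]
  have hρ : ∀ g z, ρ g z = T (ψ (φ g)).toAdd * z + ρ g 0 := by
    intro g
    induction g using FreeGroup.induction_on with
    | C1 => intro z; simp
    | of i =>
      intro z
      fin_cases i
      · change ρ xx z = T (ψ (φ xx)).toAdd * z + ρ xx 0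
        simp [hρx, h]
      · change ρ yy z = T (ψ (φ yy)).toAdd * z + ρ yy 0
        simp [ρ, yy, scale]
    | inv_of i ih =>
      intro z
      have hz := ih ((ρ (FreeGroup.of i))⁻¹ z)
      have h0 := ih ((ρ (FreeGroup.of i))⁻¹ 0)
      rw [← Equiv.Perm.mul_apply, mul_inv_cancel, Equiv.Perm.one_apply] at hz h0
      simp only [map_inv, toAdd_inv]
      have hT : (T (-(ψ (φ (FreeGroup.of i))).toAdd) * T (ψ (φ (FreeGroup.of i))).toAdd :
          ℤ[T;T⁻¹]) = 1 := by
        rw [← T_add, neg_add_cancel, T_zero]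
      linear_combination (-T (-(ψ (φ (FreeGroup.of i))).toAdd)) * (hz - h0)
        - ((ρ (FreeGroup.of i))⁻¹ z - (ρ (FreeGroup.of i))⁻¹ 0) * hT
    | mul a b iha ihb =>
      intro z
      simp only [map_mul, Equiv.Perm.mul_apply, toAdd_mul, T_add]
      rw [ihb z, iha, iha (ρ b 0)]
      ring
  refine ⟨fun g => ρ (φ.symm g) 0, fun a b => ?_, by simp [hρx]⟩
  simp only [map_mul, Equiv.Perm.mul_apply]
  rw [hρ]
  simp [add_comm]

theorem toAdd_prod_range {G : Type*} [Group G] (ψ : G →* Multiplicative ℤ) (l : ℕ → G) (n : ℕ) :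
    (ψ ((List.range n).map l).prod).toAdd = ∑ i ∈ Finset.range n, (ψ (l i)).toAdd := by
  induction n with
  | zero => simp
  | succ n ih => simp [List.range_succ, Finset.sum_range_succ, ih]

open LaurentPolynomial in
/-- The value of a twisted derivation on a product. -/
theorem derivation_prod_range {G : Type*} [Group G] (ψ : G →* Multiplicative ℤ) {D : G → ℤ[T;T⁻¹]}
    (hD : ∀ a b, D (a * b) = D a + T (ψ a).toAdd * D b) (l : ℕ → G) (n : ℕ) :
    D ((List.range n).map l).prod =
      ∑ j ∈ Finset.range n, T (∑ i ∈ Finset.range j, (ψ (l i)).toAdd) * D (l j) := by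
  induction n with
  | zero => simpa using hD 1 1
  | succ n ih =>
    rw [Finset.sum_range_succ, ← ih, List.range_succ, List.map_append, List.prod_append, hD,
      toAdd_prod_range]
    simp

theorem injOn_mul_mod {p q : ℕ} (hpq : p.Coprime q) :
    Set.InjOn (fun j => j * q % p) (Finset.range p) := by
  intro i hi j hj hij
  have hmod : i ≡ j [MOD p] := Nat.ModEq.cancel_right_of_coprime hpq hij
  exact hmod.eq_of_lt_of_lt (by simpa using hi) (by simpa using hj)

theorem exists_mul_mod_eq {p q k : ℕ} (hpq : p.Coprime q) (hk : k < p) :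
    ∃ j < p, j * q % p = k := by
  have hmaps : Set.MapsTo (fun j => j * q % p) (Finset.range p) (Finset.range p) := fun j _ => by
    simpa using Nat.mod_lt _ (by omega)
  obtain ⟨j, hj, hjk⟩ := Finset.surjOn_of_injOn_of_card_le _ hmaps (injOn_mul_mod hpq) le_rfl
    (show k ∈ (Finset.range p : Set ℕ) by simpa using hk)
  exact ⟨j, by simpa using hj, hjk⟩

theorem card_filter_mul_mod_lt {p q r : ℕ} (hpq : p.Coprime q) (hr : r ≤ p) :
    ((Finset.range p).filter fun j => j * q % p < r).card = r := by
  conv_rhs => rw [← Finset.card_range r]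
  refine Finset.card_nbij (fun j => j * q % p) (fun j hj => ?_) ?_ ?_
  · simpa using (Finset.mem_filter.1 hj).2
  · exact (injOn_mul_mod hpq).mono (Finset.coe_subset.2 (Finset.filter_subset _ _))
  · intro k hk
    have hk : k < r := by simpa using hk
    obtain ⟨j, hj, rfl⟩ := exists_mul_mod_eq hpq (hk.trans_le hr)
    exact ⟨j, by simp [hj, hk], rfl⟩

/-- For `r < p`, the word `w p q r 1` is a positive word in `xx * yy` and `yy`. -/
theorem w_one_of_lt {p q r : ℕ} (hr : r < p) :
    w p q r 1 =
      ((List.range p).map fun j => if j * q % p < r then xx * yy else yy).prod := by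
  unfold w
  congr 2
  funext j
  rw [Nat.mod_eq_of_lt hr, Nat.div_eq_of_lt hr]
  split_ifs <;> simp

open LaurentPolynomial in
/-- For coprime `p, q` with `1 < q < p/2` and `q < r < p - q`, the word
`w_{p,q,r,1}` is not primitive. -/
theorem stmt5 (p q r : ℕ) (hpq : Nat.Coprime p q)
    (hq1 : 1 < q) (hq2 : 2 * q < p) (hr1 : q < r) (hr2 : r < p - q) :
    ¬ IsPrimitive (w p q r 1) := by
  rintro ⟨φ, hφ⟩
  have hrp : r < p := by omega
  let ψ : FreeGroup (Fin 2) →* Multiplicative ℤ :=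
    FreeGroup.lift ![Multiplicative.ofAdd (p : ℤ), Multiplicative.ofAdd (-r : ℤ)]
  let l : ℕ → FreeGroup (Fin 2) := fun j => if j * q % p < r then xx * yy else yy
  have hw : w p q r 1 = ((List.range p).map l).prod := w_one_of_lt hrp
  have hψl : ∀ j, (ψ (l j)).toAdd = if j * q % p < r then (p - r : ℤ) else -r := by
    intro j
    simp only [l]
    split_ifs <;> simp [ψ, xx, yy, sub_eq_add_neg]
  let height : ℕ → ℤ := fun j => ∑ i ∈ Finset.range j, (ψ (l i)).toAdd
  have hheight : ∀ j, height (j + 1) = height j + if j * q % p < r then (p - r : ℤ) else -r :=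
    fun j => by simp only [height, Finset.sum_range_succ, hψl]
  let A := (Finset.range p).filter fun j => j * q % p < r
  let B := (Finset.range p).filter fun j => ¬ j * q % p < r
  have hA : A.card = r := card_filter_mul_mod_lt hpq hrp.le
  have hAB : A.card + B.card = p := by
    rw [Finset.card_filter_add_card_filter_not, Finset.card_range]
  have hheight_p : height p = 0 := by
    simp only [height, hψl]
    rw [Finset.sum_ite, Finset.sum_const, Finset.sum_const]
    change A.card • (p - r : ℤ) + B.card • (-r : ℤ) = 0
    have hB : (B.card : ℤ) = p - r := by omega
    rw [nsmul_eq_mul, nsmul_eq_mul, hA, hB]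
    ring
  have hψw : ψ (φ xx) = 1 := by
    rw [hφ, hw]
    exact Multiplicative.toAdd.injective ((toAdd_prod_range ψ l p).trans hheight_p)
  obtain ⟨D, hD, hDw⟩ := exists_derivation φ ψ hψw
  let P : ℤ[T;T⁻¹] := ∑ j ∈ A, T (height j)
  let Q : ℤ[T;T⁻¹] := ∑ j ∈ B, T (height j)
  have hsplit : ∀ a b : ℤ[T;T⁻¹],
      ∑ j ∈ Finset.range p, T (height j) * (if j * q % p < r then a else b) = P * a + Q * b := by
    intro a b
    simp only [mul_ite]
    rw [Finset.sum_ite, ← Finset.sum_mul, ← Finset.sum_mul]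
  have hone : P * D (xx * yy) + Q * D yy = 1 := by
    rw [← hDw, hφ, hw, derivation_prod_range ψ hD, ← hsplit]
    refine Finset.sum_congr rfl fun j _ => ?_
    rw [← apply_ite D]
  have hzero : P * (T (p - r : ℤ) - 1) + Q * (T (-r : ℤ) - 1) = 0 := by
    rw [← hsplit]
    have : ∀ j ∈ Finset.range p, (T (height j) * if j * q % p < r then (T (p - r : ℤ) - 1)
        else (T (-r : ℤ) - 1) : ℤ[T;T⁻¹]) = T (height (j + 1)) - T (height j) := by
      intro j _
      rw [hheight, T_add]
      split_ifs <;> ring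
    rw [Finset.sum_congr rfl this, Finset.sum_range_sub (fun j => (T (height j) : ℤ[T;T⁻¹])),
      hheight_p]
    simp [height]
  have hP : P * (D (xx * yy) * (T (-r : ℤ) - 1) - D yy * (T (p - r : ℤ) - 1))
      = T (-(r : ℤ)) - 1 := by
    linear_combination (T (-r : ℤ) - 1) * hone - D yy * hzero
  have hQ : Q * ((D (xx * yy) * (T (-r : ℤ) - 1) - D yy * (T (p - r : ℤ) - 1))
      * T (-((p - r : ℕ) : ℤ))) = T (-((p - r : ℕ) : ℤ)) - 1 := by
    have hT : (T (p - r : ℤ) * T (-((p - r : ℕ) : ℤ)) : ℤ[T;T⁻¹]) = 1 := by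
      rw [← T_add, Nat.cast_sub hrp.le, add_neg_cancel, T_zero]
    linear_combination T (-((p - r : ℕ) : ℤ)) * (D (xx * yy) * hzero - (T (p - r : ℤ) - 1) * hone)
      - hT
  have hwidthA : (p - r : ℤ) ≤ r := by
    have h0 : 0 ∈ A := by simp [A]; omega
    have h1 : 1 ∈ A := by simp [A, Nat.mod_eq_of_lt (show q < p by omega)]; omega
    have := width_le_of_mul_eq (by omega) hP (coeff_sum_T_ne_zero A height h0)
      (coeff_sum_T_ne_zero A height h1)
    rw [hheight 0, if_pos (Finset.mem_filter.1 h0).2] at this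
    linarith
  have hwidthB : (r : ℤ) ≤ p - r := by
    obtain ⟨j, hj, hjr⟩ := exists_mul_mod_eq hpq hrp
    have hjq : (j + 1) * q % p = r + q := by
      rw [add_mul, one_mul, Nat.add_mod, hjr, Nat.mod_eq_of_lt (show q < p by omega),
        Nat.mod_eq_of_lt (by omega)]
    have hj1 : j + 1 ≠ p := by
      intro h
      rw [h, Nat.mul_mod_right] at hjq
      omega
    have h0 : j ∈ B := by simp [B, hjr, hj]
    have h1 : j + 1 ∈ B := by simp [B, hjq]; omega
    have := width_le_of_mul_eq (by omega) hQ (coeff_sum_T_ne_zero B height h1)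
      (coeff_sum_T_ne_zero B height h0)
    rw [hheight j, if_neg (Finset.mem_filter.1 h0).2, Nat.cast_sub hrp.le] at this
    linarith
  have hBr : B.card = r := by omega
  have heval := congrArg (LaurentPolynomial.eval₂ (RingHom.id ℤ) 1) hone
  simp only [P, Q, map_add, map_mul, map_sum, eval₂_T, one_zpow, Units.val_one, Finset.sum_const,
    map_one, hA, hBr, nsmul_eq_mul, mul_one, ← mul_add] at heval
  have := Int.isUnit_iff.1 (IsUnit.of_mul_eq_one _ heval)
  omega
end

section
/- Let p ≥ 1 and q ≥ 1 be coprime integers, r ≥ 1 an integer, and m ≥ 1. If w_{p,q,r,1} is a primitive element of the free group F, then w_{p,q,r,m} is (m,p) Seifert-fibered; that is, the quotient of F by the normal closure of w_{p,q,r,m} is isomorphic to G_{m,p} = ⟨x, y | x^m y^p⟩. -/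
/-- The exponent sum of the generator `i` in an element of the free group. -/
def exponentSum (i : Fin 2) : FreeGroup (Fin 2) →* Multiplicative ℤ :=
  FreeGroup.lift (fun j => Multiplicative.ofAdd (if j = i then 1 else 0))

/-- The exponent sum of `xx`, as an integer. -/
def expX (g : FreeGroup (Fin 2)) : ℤ := (exponentSum 0 g).toAdd

/-- The exponent sum of `yy`, as an integer. -/
def expY (g : FreeGroup (Fin 2)) : ℤ := (exponentSum 1 g).toAdd

lemma expX_mul (g h : FreeGroup (Fin 2)) : expX (g * h) = expX g + expX h := by
  simp [expX]

lemma expY_mul (g h : FreeGroup (Fin 2)) : expY (g * h) = expY g + expY h := by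
  simp [expY]

lemma expY_zpow (g : FreeGroup (Fin 2)) (n : ℤ) : expY (g ^ n) = n * expY g := by
  simp [expY]

lemma expX_xx : expX xx = 1 := by simp [expX, exponentSum, xx]
lemma expX_yy : expX yy = 0 := by simp [expX, exponentSum, yy]
lemma expY_xx : expY xx = 0 := by simp [expY, exponentSum, xx]
lemma expY_yy : expY yy = 1 := by simp [expY, exponentSum, yy]

lemma hom_ext_xx_yy {H : Type*} [Group H] {f g : FreeGroup (Fin 2) →* H}
    (hx : f xx = g xx) (hy : f yy = g yy) : f = g := by
  ext i
  fin_cases i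
  · exact hx
  · exact hy

/-- A homomorphism sending both generators to powers of `T` is determined by exponent sums. -/
lemma hom_apply_eq_zpow {H : Type*} [Group H] (f : FreeGroup (Fin 2) →* H) (T : H) (k l : ℤ)
    (hx : f xx = T ^ k) (hy : f yy = T ^ l) (g : FreeGroup (Fin 2)) :
    f g = T ^ (k * expX g + l * expY g) := by
  let e : FreeGroup (Fin 2) →* H := MonoidHom.mk' (fun g => T ^ (k * expX g + l * expY g)) (by
    intro a b
    rw [expX_mul, expY_mul, ← zpow_add]
    congr 1
    ring)
  have hfe : f = e := hom_ext_xx_yy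
    (by simp [e, hx, expX_xx, expY_xx]) (by simp [e, hy, expX_yy, expY_yy])
  exact DFunLike.congr_fun hfe g

lemma expX_map (φ : FreeGroup (Fin 2) →* FreeGroup (Fin 2)) (g : FreeGroup (Fin 2)) :
    expX (φ g) = expX (φ xx) * expX g + expX (φ yy) * expY g := by
  have h := hom_apply_eq_zpow ((exponentSum 0).comp φ) (Multiplicative.ofAdd 1)
    (expX (φ xx)) (expX (φ yy)) (by simp [expX, ← ofAdd_zsmul]) (by simp [expX, ← ofAdd_zsmul]) g
  simpa [expX, expY] using congrArg Multiplicative.toAdd h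

lemma expY_map (φ : FreeGroup (Fin 2) →* FreeGroup (Fin 2)) (g : FreeGroup (Fin 2)) :
    expY (φ g) = expY (φ xx) * expX g + expY (φ yy) * expY g := by
  have h := hom_apply_eq_zpow ((exponentSum 1).comp φ) (Multiplicative.ofAdd 1)
    (expY (φ xx)) (expY (φ yy)) (by simp [expY, ← ofAdd_zsmul]) (by simp [expY, ← ofAdd_zsmul]) g
  simpa [expX, expY] using congrArg Multiplicative.toAdd h

/-- The off-diagonal exponent sums of an automorphism and of its inverse agree up to sign. -/
lemma exists_sign_expY_symm (φ : FreeGroup (Fin 2) ≃* FreeGroup (Fin 2)) :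
    ∃ ε : ℤ, ε * ε = 1 ∧ expY (φ.symm xx) = ε * expY (φ xx) := by
  have h₁ := expY_map φ.toMonoidHom (φ.symm xx)
  have h₂ := expX_map φ.toMonoidHom (φ.symm xx)
  have h₃ := expY_map φ.symm.toMonoidHom (φ xx)
  have h₄ := expX_map φ.symm.toMonoidHom (φ xx)
  simp only [MulEquiv.toMonoidHom_eq_coe, MonoidHom.coe_coe, MulEquiv.apply_symm_apply,
    MulEquiv.symm_apply_apply, expX_xx, expY_xx] at h₁ h₂ h₃ h₄
  have hdvd : expY (φ.symm xx) ∣ expY (φ xx) := by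
    refine ⟨expX (φ yy) * expY (φ xx) - expX (φ xx) * expY (φ yy), ?_⟩
    linear_combination expY (φ xx) * h₂ - expX (φ xx) * h₁
  have hdvd' : expY (φ xx) ∣ expY (φ.symm xx) := by
    refine ⟨expX (φ.symm yy) * expY (φ.symm xx) - expX (φ.symm xx) * expY (φ.symm yy), ?_⟩
    linear_combination expY (φ.symm xx) * h₄ - expX (φ.symm xx) * h₃
  rcases Int.associated_iff.mp (associated_of_dvd_dvd hdvd hdvd') with h | h
  · exact ⟨1, by norm_num, by linarith⟩
  · exact ⟨-1, by norm_num, by linarith⟩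

/-- The endomorphism `xx ↦ xx ^ m`, `yy ↦ yy`. -/
def powX (m : ℤ) : FreeGroup (Fin 2) →* FreeGroup (Fin 2) :=
  FreeGroup.lift ![xx ^ m, yy]

lemma powX_xx (m : ℤ) : powX m xx = xx ^ m := by
  rw [powX, xx, FreeGroup.lift_apply_of]; rfl

lemma powX_yy (m : ℤ) : powX m yy = yy := by
  rw [powX, yy, FreeGroup.lift_apply_of]; rfl

lemma powX_w (p q r : ℕ) (m : ℤ) : powX m (w p q r 1) = w p q r m := by
  simp only [w, map_list_prod, List.map_map]
  congr 2
  funext j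
  simp only [Function.comp_apply, map_mul, map_zpow, powX_xx, powX_yy, one_mul, zpow_mul]

lemma expY_w (p q r : ℕ) (m : ℤ) : expY (w p q r m) = p := by
  have key : ∀ (e : ℕ → ℤ) (l : List ℕ),
      expY ((l.map (fun j => xx ^ e j * yy)).prod) = l.length := by
    intro e l
    induction l with
    | nil => simp [expY]
    | cons j l ih =>
      rw [List.map_cons, List.prod_cons, expY_mul, expY_mul, expY_zpow, expY_xx, expY_yy, ih]
      push_cast [List.length_cons]
      ring
  exact (key _ (List.range p)).trans (by rw [List.length_range])

lemma mk_eq_one_of_singleton (g : FreeGroup (Fin 2)) :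
    PresentedGroup.mk ({g} : Set (FreeGroup (Fin 2))) g = 1 :=
  PresentedGroup.one_of_mem rfl

/-- A homomorphism killing `g` factors through `⟨x, y | g⟩`. -/
lemma exists_hom_presentedGroup {H : Type*} [Group H] (g : FreeGroup (Fin 2))
    (f : FreeGroup (Fin 2) →* H) (hf : f g = 1) :
    ∃ F : PresentedGroup ({g} : Set (FreeGroup (Fin 2))) →* H,
      ∀ v, F (PresentedGroup.mk _ v) = f v := by
  refine ⟨QuotientGroup.lift _ f ?_, fun v => rfl⟩
  exact Subgroup.normalClosure_le_normal (by simpa using hf)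

lemma exists_hom_freeGroup {H : Type*} [Group H] (a b : H) :
    ∃ f : FreeGroup (Fin 2) →* H, f xx = a ∧ f yy = b :=
  ⟨FreeGroup.lift ![a, b], by rw [xx, FreeGroup.lift_apply_of]; rfl,
    by rw [yy, FreeGroup.lift_apply_of]; rfl⟩

/-- If `v` is primitive, substituting `xx ^ m` for `xx` in `v` gives an
`(m, expY v)` Seifert-fibered element. -/
theorem IsPrimitive.isSF_powX {v : FreeGroup (Fin 2)} (hv : IsPrimitive v) (m : ℤ) :
    IsSF (powX m v) m (expY v) := by
  obtain ⟨φ, rfl⟩ := hv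
  obtain ⟨ε, hε, ha⟩ := exists_sign_expY_symm φ
  set p := expY (φ xx)
  set a := expY (φ.symm xx)
  set b := expY (φ.symm yy)
  let π := PresentedGroup.mk ({powX m (φ xx)} : Set (FreeGroup (Fin 2)))
  let κ := PresentedGroup.mk ({xx ^ m * yy ^ p} : Set (FreeGroup (Fin 2)))
  have hπ : π (powX m (φ xx)) = 1 := mk_eq_one_of_singleton _
  have hκ : κ xx ^ m * κ yy ^ p = 1 := by
    simpa [κ] using mk_eq_one_of_singleton (xx ^ m * yy ^ p)
  -- in the first quotient, `xx ^ m` and `yy` are powers of `T`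
  let T := π (powX m (φ yy))
  have hT : ∀ g, π (powX m g) = T ^ expY (φ.symm g) := by
    intro g
    have h := hom_apply_eq_zpow ((π.comp (powX m)).comp φ.toMonoidHom) T 0 1
      (by simpa using hπ) (by simp [T]) (φ.symm g)
    simpa using h
  have hTx : π xx ^ m = T ^ a := by simpa [powX_xx] using hT xx
  have hTy : π yy = T ^ b := by simpa [powX_yy] using hT yy
  -- the corresponding element of the second quotient
  let s := κ yy ^ (-ε)
  have hs : κ xx ^ m = s ^ a := by
    rw [eq_inv_of_mul_eq_one_left hκ, ← zpow_neg, ← zpow_mul, ha]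
    congr 1
    linear_combination p * hε
  have hsy : s ^ (-ε) = κ yy := by
    rw [← zpow_mul, neg_mul_neg, hε, zpow_one]
  obtain ⟨f, hfx, hfy⟩ := exists_hom_freeGroup (κ xx) (s ^ b)
  have hf : ∀ g, f (powX m g) = s ^ expY (φ.symm g) := by
    intro g
    rw [show f (powX m g) = (f.comp (powX m)) g from rfl,
      hom_apply_eq_zpow (f.comp (powX m)) s a b (by simp [powX_xx, hfx, hs])
        (by simp [powX_yy, hfy]) g]
    congr 1
    exact (expY_map φ.symm.toMonoidHom g).symm
  obtain ⟨f', hfx', hfy'⟩ := exists_hom_freeGroup (π xx) (T ^ (-ε))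
  obtain ⟨A, hA⟩ := exists_hom_presentedGroup (powX m (φ xx)) f (by simp [hf, expY_xx])
  obtain ⟨B, hB⟩ := exists_hom_presentedGroup (xx ^ m * yy ^ p) f' (by
    rw [map_mul, map_zpow, map_zpow, hfx', hfy', hTx, ← zpow_mul, ← zpow_add, ha]
    simp)
  have hBs : B s = T := by
    rw [map_zpow, hB, hfy', ← zpow_mul, neg_mul_neg, hε, zpow_one]
  have hAT : A T = s := by
    rw [hA, hf]
    simp [expY_yy]
  have hBA : (B.comp A).comp π = π := hom_ext_xx_yy
    (by simp [π, hA, hfx, κ, hB, hfx'])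
    (by simp only [MonoidHom.comp_apply]; rw [hA, hfy, map_zpow, hBs, hTy])
  have hAB : (A.comp B).comp κ = κ := hom_ext_xx_yy
    (by simp [π, hA, hfx, κ, hB, hfx'])
    (by simp only [MonoidHom.comp_apply]; rw [hB, hfy', map_zpow, hAT, hsy])
  refine ⟨MonoidHom.toMulEquiv A B ?_ ?_⟩
  · exact (MonoidHom.cancel_right (QuotientGroup.mk'_surjective _)).mp hBA
  · exact (MonoidHom.cancel_right (QuotientGroup.mk'_surjective _)).mp hAB

/-- If `w_{p,q,r,1}` is primitive then `w_{p,q,r,m}` is `(m,p)` Seifert-fibered: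
the quotient of the free group by the normal closure of `w_{p,q,r,m}` is
isomorphic to `G_{m,p} = ⟨x, y | x^m y^p⟩`. -/
theorem stmt6 (p q r : ℕ) (m : ℤ) (hp : 1 ≤ p) (hq : 1 ≤ q)
    (hpq : Nat.Coprime p q) (hr : 1 ≤ r) (hm : 1 ≤ m)
    (hprim : IsPrimitive (w p q r 1)) :
    IsSF (w p q r m) m (p : ℤ) := by
  have h := hprim.isSF_powX m
  rwa [powX_w, expY_w] at h
end

section
/- Let p and q be coprime integers with 1 ≤ q < p/2, and let β be an integer with 1 ≤ β and βq < p. Then both w_{p,q,βq,1} and w_{p,q,p−βq,1} are (β, p−βq) Seifert-fibered; that is, the quotient of F by the normal closure of either element is isomorphic to G_{β, p−βq} = ⟨x, y | x^β y^{p−βq}⟩. -/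
section CyclicWords

variable {H : Type*} [Group H]

/-- The positive word of length `p` in `a` and `b` whose `j`-th letter is `a` when
`j * q % p < r` and `b` otherwise. -/
def cyclicWord (p q r : ℕ) (a b : H) : H :=
  ((List.range p).map (fun j => if j * q % p < r then a else b)).prod

theorem map_cyclicWord {K : Type*} [Group K] (φ : H →* K) (p q r : ℕ) (a b : H) :
    φ (cyclicWord p q r a b) = cyclicWord p q r (φ a) (φ b) := by
  simp only [cyclicWord, map_list_prod, List.map_map]
  congr 1
  refine List.map_congr_left fun j _ => ?_
  simp only [Function.comp_apply]
  split_ifs <;> rfl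

theorem isConj_prod_rotate {f : ℕ → H} {p : ℕ} (hf : ∀ j, f (j + p) = f j) (s : ℕ) :
    IsConj ((List.range p).map f).prod ((List.range p).map (fun j => f (j + s))).prod := by
  induction s with
  | zero => exact IsConj.refl _
  | succ s ih =>
    refine ih.trans ?_
    have h1 := List.prod_range_succ (fun j => f (j + s)) p
    have h2 := List.prod_range_succ' (fun j => f (j + s)) p
    rw [h1] at h2
    have h3 : f (p + s) = f (0 + s) := by rw [add_comm, hf, zero_add]
    have h4 : (fun j => f (j.succ + s)) = fun j => f (j + (s + 1)) := by
      funext j; congr 1; omega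
    rw [h3, h4] at h2
    rw [isConj_iff]
    refine ⟨(f (0 + s))⁻¹, ?_⟩
    rw [mul_assoc, inv_inv, h2, inv_mul_cancel_left]

theorem prod_range_add (f : ℕ → H) (m n : ℕ) :
    ((List.range (m + n)).map f).prod =
      ((List.range m).map f).prod * ((List.range n).map (fun j => f (m + j))).prod := by
  rw [List.range_add, List.map_append, List.prod_append, List.map_map]
  rfl

theorem prod_range_eq_pow {f : ℕ → H} {a : H} {n : ℕ} (h : ∀ j < n, f j = a) :
    ((List.range n).map f).prod = a ^ n := by
  induction n with
  | zero => simp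
  | succ n ih =>
    rw [List.prod_range_succ, ih fun j hj => h j (by omega), h n (by omega), pow_succ]

/-- A word `cyclicWord p q (β * q) a b` and its rotation starting at the residue `-1` differ
only by exchanging `a ^ β * b` with `b * a ^ β`. -/
theorem commute_of_cyclicWord_eq_one {p q β : ℕ} (hpq : Nat.Coprime p q) (hq : 1 ≤ q)
    (hβ : 1 ≤ β) (hβq : β * q < p) {a b : H} (h : cyclicWord p q (β * q) a b = 1) :
    Commute (a ^ β) b := by
  have hβp : β < p := lt_of_le_of_lt (Nat.le_mul_of_pos_right β hq) hβq
  obtain ⟨s, hs⟩ : ∃ s : ℕ, s * q % p = p - 1 := by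
    obtain ⟨s, -, hs⟩ := Nat.exists_mul_mod_eq_of_coprime (p - 1) hpq.symm (by omega)
    refine ⟨s, ?_⟩
    rw [mul_comm, hs, Nat.mod_eq_of_lt (by omega)]
  have hshift : ∀ j, (j + s) * q % p = (j * q % p + (p - 1)) % p := fun j => by
    rw [add_mul, Nat.add_mod, hs]
  set f : ℕ → H := fun j => if j * q % p < β * q then a else b with hf
  have hper : ∀ j, f (j + p) = f j := fun j => by simp [hf, add_mul]
  have h0 : ((List.range p).map f).prod = 1 := h
  have h1 : ((List.range p).map (fun j => f (j + s))).prod = 1 := by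
    have := isConj_prod_rotate hper s
    rwa [h0, isConj_one_right] at this
  obtain ⟨m, rfl⟩ : ∃ m, p = β + 1 + m := ⟨p - (β + 1), by omega⟩
  rw [prod_range_add] at h0 h1
  have hsmall : ∀ j < β, j * q + q ≤ β * q := fun j hj => by
    rw [← Nat.succ_mul]; exact Nat.mul_le_mul_right q hj
  have head0 : ((List.range (β + 1)).map f).prod = a ^ β * b := by
    rw [List.prod_range_succ, prod_range_eq_pow (a := a)]
    · simp [hf, Nat.mod_eq_of_lt hβq]
    · intro j hj
      have := hsmall j hj
      simp only [hf]
      rw [Nat.mod_eq_of_lt (by omega), if_pos (by omega)]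
  have head1 : ((List.range (β + 1)).map (fun j => f (j + s))).prod = b * a ^ β := by
    rw [List.prod_range_succ', prod_range_eq_pow (a := a)]
    · congr 1
      simp only [hf, zero_add]
      rw [hs, if_neg (by omega)]
    · intro j hj
      have := hsmall j hj
      simp only [hf]
      rw [hshift, Nat.succ_mul, Nat.mod_eq_of_lt (a := j * q + q) (by omega),
        show j * q + q + (β + 1 + m - 1) = j * q + q - 1 + (β + 1 + m) by omega,
        Nat.add_mod_right, Nat.mod_eq_of_lt (by omega), if_pos (by omega)]
  have tail : ∀ j ∈ List.range m, f (β + 1 + j + s) = f (β + 1 + j) := by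
    intro j hj
    have hj := List.mem_range.1 hj
    simp only [hf]
    rw [hshift]
    have hlt : (β + 1 + j) * q % (β + 1 + m) < β + 1 + m := Nat.mod_lt _ (by omega)
    have hne0 : (β + 1 + j) * q % (β + 1 + m) ≠ 0 := fun h => by
      have := Nat.le_of_dvd (by omega) (hpq.dvd_of_dvd_mul_right (Nat.dvd_of_mod_eq_zero h))
      omega
    have hneβ : (β + 1 + j) * q % (β + 1 + m) ≠ β * q := fun h => by
      have h' : (β + 1 + j) * q ≡ β * q [MOD β + 1 + m] := by
        rw [Nat.ModEq, h, Nat.mod_eq_of_lt hβq]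
      have h'' : β + 1 + j ≡ β [MOD β + 1 + m] := Nat.ModEq.cancel_right_of_coprime hpq h'
      rw [Nat.ModEq, Nat.mod_eq_of_lt (by omega), Nat.mod_eq_of_lt (by omega)] at h''
      omega
    generalize (β + 1 + j) * q % (β + 1 + m) = v at *
    rw [show v + (β + 1 + m - 1) = v - 1 + (β + 1 + m) by omega, Nat.add_mod_right,
      Nat.mod_eq_of_lt (by omega)]
    congr 1
    apply propext
    omega
  rw [head0] at h0
  rw [head1, List.map_congr_left tail] at h1
  exact mul_right_cancel (h0.trans h1.symm)

/-- If `a ^ β` commutes with `b`, then prefixes of `cyclicWord p q (β * q) a b` collapse: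
the prefix of length `J` runs through `J * q / p` full blocks `a ^ β * b ^ _`. -/
theorem prod_range_of_commute {p q β : ℕ} (hq : 1 ≤ q) (hqp : q < p)
    (hβ : 1 ≤ β) (hβq : β * q < p) {a b : H} (hc : Commute (a ^ β) b) (J : ℕ) :
    ((List.range J).map (fun j => if j * q % p < β * q then a else b)).prod =
      if J * q % p < β * q then
        (a ^ β) ^ (J * q / p) * b ^ ((J : ℤ) - β * (J * q / p : ℕ) - (J * q % p / q : ℕ)) *
          a ^ (J * q % p / q)
      else (a ^ β) ^ (J * q / p + 1) * b ^ ((J : ℤ) - β * ((J * q / p : ℕ) + 1)) := by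
  have hp : 0 < p := by omega
  have hqβ : q ≤ β * q := Nat.le_mul_of_pos_left q hβ
  induction J with
  | zero => simp [show 0 < β * q by omega]
  | succ J ih =>
    rw [List.prod_range_succ, ih]
    have hdm := Nat.div_add_mod (J * q) p
    have hv := Nat.mod_lt (J * q) hp
    set v := J * q % p
    set i := J * q / p
    have hcz : ∀ n : ℤ, Commute (a ^ β) (b ^ n) := fun n => hc.zpow_right n
    by_cases hwrap : v + q < p
    · have hdiv : (J + 1) * q / p = i := by
        rw [Nat.div_eq_iff hp, add_mul, mul_comm i]; omega
      have hmod : (J + 1) * q % p = v + q := by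
        have := Nat.div_add_mod ((J + 1) * q) p
        rw [hdiv, add_mul] at this
        rw [add_mul]; omega
      rw [hdiv, hmod, Nat.add_div_right _ (by omega)]
      by_cases h1 : v < β * q
      · rw [if_pos h1, if_pos h1]
        by_cases h2 : v + q < β * q
        · rw [if_pos h2, pow_succ, mul_assoc, mul_assoc, mul_assoc]
          congr 3
          push_cast; ring
        · have hvq : v / q = β - 1 := by
            rw [Nat.div_eq_iff (by omega), Nat.sub_mul]; omega
          rw [if_neg h2, hvq, mul_assoc, ← pow_succ, Nat.sub_add_cancel hβ, mul_assoc,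
            ← (hcz _).eq, ← mul_assoc, ← pow_succ]
          congr 2
          push_cast [hβ]; ring
      · rw [if_neg h1, if_neg h1, if_neg (by omega), mul_assoc, ← zpow_add_one]
        congr 2
        push_cast; ring
    · have hdiv : (J + 1) * q / p = i + 1 := by
        rw [Nat.div_eq_iff hp, add_mul, add_mul, mul_comm i]; omega
      have hmod : (J + 1) * q % p = v + q - p := by
        have := Nat.div_add_mod ((J + 1) * q) p
        rw [hdiv, add_mul, mul_add] at this
        rw [add_mul]; omega
      rw [hdiv, hmod, if_pos (show v + q - p < β * q by omega),
        Nat.div_eq_of_lt (show v + q - p < q by omega), pow_zero, mul_one]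
      by_cases h1 : v < β * q
      · have hvq : v / q = β - 1 := by
          rw [Nat.div_eq_iff (by omega), Nat.sub_mul]; omega
        rw [if_pos h1, if_pos h1, hvq, mul_assoc, ← pow_succ, Nat.sub_add_cancel hβ, mul_assoc,
          ← (hcz _).eq, ← mul_assoc, ← pow_succ]
        congr 2
        push_cast [hβ]; ring
      · rw [if_neg h1, if_neg h1, mul_assoc, ← zpow_add_one]
        congr 2
        push_cast; ring

theorem cyclicWord_of_commute {p q β : ℕ} (hq : 1 ≤ q) (hqp : q < p)
    (hβ : 1 ≤ β) (hβq : β * q < p) {a b : H} (hc : Commute (a ^ β) b) :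
    cyclicWord p q (β * q) a b = (a ^ β) ^ q * b ^ ((p : ℤ) - β * q) := by
  have h : 0 < β * q := Nat.mul_pos hβ hq
  have := prod_range_of_commute hq hqp hβ hβq hc p
  simpa [cyclicWord, h, Nat.mul_div_cancel_left q (show 0 < p by omega)] using this

/-- The complementary word is a rotation of the original one with the letters exchanged. -/
theorem isConj_cyclicWord_sub {p q β : ℕ} (hβq : β * q < p) (a b : H) :
    IsConj (cyclicWord p q (β * q) b a) (cyclicWord p q (p - β * q) a b) := by
  have := isConj_prod_rotate (f := fun j => if j * q % p < β * q then b else a) (p := p)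
    (fun j => by simp [add_mul]) β
  suffices h : cyclicWord p q (p - β * q) a b =
      ((List.range p).map (fun j => if (j + β) * q % p < β * q then b else a)).prod from h ▸ this
  refine congrArg List.prod (List.map_congr_left fun j _ => ?_)
  have hv : j * q % p < p := Nat.mod_lt _ (by omega)
  have hshift : (j + β) * q % p = (j * q % p + β * q) % p := by rw [add_mul]; simp
  simp only [hshift]
  generalize j * q % p = v at *
  by_cases h : v < p - β * q
  · rw [if_pos h, Nat.mod_eq_of_lt (by omega), if_neg (by omega)]
  · rw [if_neg h, Nat.mod_eq_sub_mod (by omega), Nat.mod_eq_of_lt (by omega), if_pos (by omega)]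

end CyclicWords

theorem IsSF.of_isConj {g h : FreeGroup (Fin 2)} {a b : ℤ} (hh : IsSF h a b)
    (e : FreeGroup (Fin 2) ≃* FreeGroup (Fin 2)) (hc : IsConj (e h) g) : IsSF g a b := by
  obtain ⟨ψ⟩ := hh
  refine ⟨(QuotientGroup.congr (Subgroup.normalClosure {h}) (Subgroup.normalClosure {g}) e
    ?_).symm.trans ψ⟩
  rw [Subgroup.map_normalClosure _ _ e.surjective, Set.image_singleton]
  obtain ⟨c, hc⟩ := isConj_iff.1 hc
  apply le_antisymm
  · refine Subgroup.normalClosure_le_normal (Set.singleton_subset_iff.2 ?_)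
    have : e h = c⁻¹ * g * c⁻¹⁻¹ := by rw [← hc]; group
    exact this ▸ Subgroup.normalClosure_normal.conj_mem _
      (Subgroup.subset_normalClosure (Set.mem_singleton g)) _
  · refine Subgroup.normalClosure_le_normal (Set.singleton_subset_iff.2 ?_)
    exact hc ▸ Subgroup.normalClosure_normal.conj_mem _
      (Subgroup.subset_normalClosure (Set.mem_singleton (e h))) _

theorem isSF_cyclicWord {p q β : ℕ} (hpq : Nat.Coprime p q)
    (hq : 1 ≤ q) (hqp : q < p) (hβ : 1 ≤ β) (hβq : β * q < p) :
    IsSF (cyclicWord p q (β * q) xx yy) (β : ℤ) ((p : ℤ) - β * q) := by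
  obtain ⟨c, d, hcd⟩ : ∃ c d : ℤ, d * q - ((p : ℤ) - β * q) * c = 1 := by
    obtain ⟨u, v, huv⟩ := Nat.isCoprime_iff_coprime.2 hpq
    exact ⟨-u, v + u * β, by linear_combination huv⟩
  set n : ℤ := (p : ℤ) - β * q with hn
  have hrel : (PresentedGroup.of 0 : Gg β n) ^ β * (PresentedGroup.of 1 : Gg β n) ^ n = 1 := by
    have := PresentedGroup.one_of_mem (rels := {xx ^ (β : ℤ) * yy ^ n}) (Set.mem_singleton _)
    rwa [map_mul, map_zpow, map_zpow, zpow_natCast] at this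
  have hW : cyclicWord p q (β * q)
      (PresentedGroup.of 0 : PresentedGroup {cyclicWord p q (β * q) xx yy})
      (PresentedGroup.of 1) = 1 := by
    have := PresentedGroup.one_of_mem (rels := {cyclicWord p q (β * q) xx yy})
      (Set.mem_singleton _)
    rwa [map_cyclicWord] at this
  set X : PresentedGroup {cyclicWord p q (β * q) xx yy} := PresentedGroup.of 0 with hX
  set Y : PresentedGroup {cyclicWord p q (β * q) xx yy} := PresentedGroup.of 1 with hY
  set x : Gg β n := PresentedGroup.of 0 with hx
  set y : Gg β n := PresentedGroup.of 1 with hy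
  have hXY : Commute (X ^ β) Y := commute_of_cyclicWord_eq_one hpq hq hβ hβq hW
  have hXYrel : (X ^ β) ^ q * Y ^ n = 1 := by
    rw [← cyclicWord_of_commute hq hqp hβ hβq hXY, hW]
  have hxβ : x ^ β = y ^ (-n) := by rw [zpow_neg]; exact eq_inv_of_mul_eq_one_left hrel
  have hXq : (X ^ β) ^ (q : ℤ) = Y ^ (-n) := by
    rw [zpow_natCast, zpow_neg]; exact eq_inv_of_mul_eq_one_left hXYrel
  set Z := (X ^ β) ^ c * Y ^ d with hZ
  have hXYz : ∀ k l : ℤ, Commute ((X ^ β) ^ k) (Y ^ l) := fun k l => hXY.zpow_zpow k l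
  have hZq : Z ^ (q : ℤ) = Y := by
    rw [hZ, (hXYz c d).mul_zpow, ← zpow_mul, mul_comm c, zpow_mul, hXq, ← zpow_mul, ← zpow_mul,
      ← zpow_add, show -n * c + d * q = 1 by linear_combination hcd, zpow_one]
  have hZn : X ^ β * Z ^ n = 1 := by
    have hYn : Y ^ n = (X ^ β) ^ (-(q : ℤ)) := by
      rw [zpow_neg, hXq, zpow_neg, inv_inv]
    rw [hZ, (hXYz c d).mul_zpow, ← zpow_mul, ← zpow_mul, mul_comm d, zpow_mul Y, hYn,
      ← zpow_mul, ← zpow_add, ← zpow_one_add,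
      show 1 + (c * n + -(q : ℤ) * d) = 0 by linear_combination -hcd, zpow_zero]
  have hf : ∀ r ∈ ({cyclicWord p q (β * q) xx yy} : Set (FreeGroup (Fin 2))),
      FreeGroup.lift ![x, y ^ (q : ℤ)] r = 1 := by
    rintro r rfl
    have hc : Commute (x ^ β) (y ^ (q : ℤ)) := hxβ ▸ Commute.zpow_zpow_self y _ _
    rw [map_cyclicWord]
    simp only [xx, yy, FreeGroup.lift_apply_of, Matrix.cons_val_zero, Matrix.cons_val_one]
    rw [cyclicWord_of_commute hq hqp hβ hβq hc, hxβ, ← zpow_natCast, ← zpow_mul, ← zpow_mul,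
      ← zpow_add, show -n * (q : ℤ) + q * ((p : ℤ) - β * q) = 0 by rw [hn]; ring, zpow_zero]
  have hb : ∀ r ∈ ({xx ^ (β : ℤ) * yy ^ n} : Set (FreeGroup (Fin 2))),
      FreeGroup.lift ![X, Z] r = 1 := by
    rintro r rfl
    have hxx : FreeGroup.lift ![X, Z] xx = X := FreeGroup.lift_apply_of
    have hyy : FreeGroup.lift ![X, Z] yy = Z := FreeGroup.lift_apply_of
    rw [map_mul, map_zpow, map_zpow, hxx, hyy, zpow_natCast, hZn]
  refine ⟨MonoidHom.toMulEquiv (PresentedGroup.toGroup hf) (PresentedGroup.toGroup hb) ?_ ?_⟩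
  · refine PresentedGroup.ext fun i => ?_
    fin_cases i
    · simp [hx, hX]
    · simpa [hy] using hZq
  · refine PresentedGroup.ext fun i => ?_
    fin_cases i
    · simp [hx, hX]
    · have : (x ^ β) ^ c * (y ^ (q : ℤ)) ^ d = y := by
        rw [hxβ, ← zpow_mul, ← zpow_mul, ← zpow_add,
          show -n * c + q * d = 1 by linear_combination hcd, zpow_one]
      simpa [hZ, hX, hY] using this

/-- The automorphism `x ↦ x * y`, `y ↦ y`. -/
def mulRightAut : FreeGroup (Fin 2) ≃* FreeGroup (Fin 2) :=
  MonoidHom.toMulEquiv (FreeGroup.lift ![xx * yy, yy]) (FreeGroup.lift ![xx * yy⁻¹, yy])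
    (by ext i; fin_cases i <;> simp [xx, yy]) (by ext i; fin_cases i <;> simp [xx, yy])

/-- The automorphism `x ↦ y`, `y ↦ x * y`. -/
def swapMulAut : FreeGroup (Fin 2) ≃* FreeGroup (Fin 2) :=
  MonoidHom.toMulEquiv (FreeGroup.lift ![yy, xx * yy]) (FreeGroup.lift ![yy * xx⁻¹, xx])
    (by ext i; fin_cases i <;> simp [xx, yy]) (by ext i; fin_cases i <;> simp [xx, yy])

theorem mulRightAut_xx : mulRightAut xx = xx * yy := by simp [mulRightAut, xx]

theorem mulRightAut_yy : mulRightAut yy = yy := by simp [mulRightAut, yy]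

theorem swapMulAut_xx : swapMulAut xx = yy := by simp [swapMulAut, xx]

theorem swapMulAut_yy : swapMulAut yy = xx * yy := by simp [swapMulAut, yy]

theorem w_eq_cyclicWord {p q r : ℕ} (hr : r < p) :
    w p q r 1 = cyclicWord p q r (xx * yy) yy := by
  rw [w, cyclicWord, Nat.mod_eq_of_lt hr, Nat.div_eq_of_lt hr]
  congr 1
  refine List.map_congr_left fun j _ => ?_
  split_ifs <;> simp

/-- For coprime `p, q` with `1 ≤ q < p/2` and any `β ≥ 1` with `β q < p`,
both `w_{p,q,βq,1}` and `w_{p,q,p-βq,1}` are `(β, p - βq)` Seifert-fibered. -/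
theorem stmt7 (p q β : ℕ) (hpq : Nat.Coprime p q)
    (hq1 : 1 ≤ q) (hq2 : 2 * q < p) (hβ1 : 1 ≤ β) (hβ2 : β * q < p) :
    IsSF (w p q (β * q) 1) (β : ℤ) ((p : ℤ) - β * q) ∧
    IsSF (w p q (p - β * q) 1) (β : ℤ) ((p : ℤ) - β * q) := by
  have hqp : q < p := by omega
  have h := isSF_cyclicWord hpq hq1 hqp hβ1 hβ2
  have hpos : 0 < β * q := Nat.mul_pos hβ1 hq1
  constructor
  · refine h.of_isConj mulRightAut ?_
    have := map_cyclicWord mulRightAut.toMonoidHom p q (β * q) xx yy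
    rw [w_eq_cyclicWord hβ2, ← mulRightAut_xx, ← mulRightAut_yy]
    exact this ▸ IsConj.refl _
  · refine h.of_isConj swapMulAut ?_
    have := map_cyclicWord swapMulAut.toMonoidHom p q (β * q) xx yy
    rw [w_eq_cyclicWord (by omega), ← swapMulAut_yy, ← swapMulAut_xx]
    exact this ▸ isConj_cyclicWord_sub hβ2 _ _
end

section
/- Let p and q be coprime integers with 1 ≤ q < p/2. Then there exist positive integers k_1, …, k_q such that ŵ_{p,q,q} = x y^{k_1} x y^{k_2} ⋯ x y^{k_q}, and for every integer β with 1 ≤ β and βq < p one has k_i + 1 − β ≥ 0 for each i and ŵ_{p,q,βq} = x^β y^{k_1+1−β} x^β y^{k_2+1−β} ⋯ x^β y^{k_q+1−β}. -/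
/-- The word `ŵ_{p,q,r} = ∏_{j=0}^{p-1} z_j` with `z_j = x` if `(j q mod p) < r`
and `z_j = y` otherwise (the image of `w_{p,q,r,1}` under the automorphism
fixing `y` and sending `x` to `x y⁻¹`). -/
def what (p q r : ℕ) : FreeGroup (Fin 2) :=
  ((List.range p).map (fun j => if j * q % p < r then xx else yy)).prod

/-- Splitting a product over `range (c n)` into consecutive blocks `[c i, c (i + 1))`. -/
lemma prod_map_range_eq_prod_ofFn_blocks {M : Type*} [Monoid M] (f : ℕ → M) (c : ℕ → ℕ)
    (hc : Monotone c) (hc0 : c 0 = 0) (n : ℕ) :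
    ((List.range (c n)).map f).prod =
      (List.ofFn (fun i : Fin n =>
        ((List.range (c (i + 1) - c i)).map (fun t => f (c i + t))).prod)).prod := by
  induction n with
  | zero => simp [hc0]
  | succ n ih =>
    have h : c (n + 1) = c n + (c (n + 1) - c n) := (Nat.add_sub_cancel' (hc n.le_succ)).symm
    rw [h, List.range_add, List.map_append, List.prod_append, ih, List.ofFn_succ',
      List.concat_eq_append, List.prod_append]
    simp [Function.comp_def]

lemma prod_map_range_ite_lt {M : Type*} [Monoid M] (a b : M) (β m : ℕ) :
    ((List.range (β + m)).map (fun t => if t < β then a else b)).prod = a ^ β * b ^ m := by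
  rw [List.range_add, List.map_append, List.prod_append]
  congr 1
  · rw [List.map_congr_left (g := fun _ => a) (by simp +contextual)]
    simp
  · simp [Function.comp_def]

/-- The least `j` with `i * p ≤ j * q`. -/
def blockStart (p q i : ℕ) : ℕ := (i * p + (q - 1)) / q

section blockStart

variable {p q : ℕ}

lemma blockStart_mono : Monotone (blockStart p q) := fun _ _ h =>
  Nat.div_le_div_right (Nat.add_le_add_right (Nat.mul_le_mul_right p h) _)

lemma blockStart_zero (hq : 1 ≤ q) : blockStart p q 0 = 0 := by
  simp only [blockStart, zero_mul, zero_add]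
  exact Nat.div_eq_of_lt (by omega)

lemma blockStart_self (hq : 1 ≤ q) : blockStart p q q = p := by
  rw [blockStart, Nat.mul_add_div (by omega), Nat.div_eq_of_lt (by omega), add_zero]

lemma le_blockStart_mul (hq : 1 ≤ q) (i : ℕ) : i * p ≤ blockStart p q i * q := by
  have h := Nat.div_add_mod (i * p + (q - 1)) q
  have h' := Nat.mod_lt (i * p + (q - 1)) (show 0 < q by omega)
  rw [blockStart, mul_comm _ q]
  omega

lemma blockStart_mul_lt (hq : 1 ≤ q) (i : ℕ) : blockStart p q i * q < i * p + q := by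
  have h := Nat.div_mul_le_self (i * p + (q - 1)) q
  rw [blockStart]
  omega

lemma blockStart_add_le (hq : 1 ≤ q) {β : ℕ} (hβ : β * q < p) (i : ℕ) :
    blockStart p q i + β ≤ blockStart p q (i + 1) := by
  have h₁ := blockStart_mul_lt (p := p) hq i
  have h₂ := le_blockStart_mul (p := p) hq (i + 1)
  by_contra! h
  have h₃ : (blockStart p q (i + 1) + 1) * q ≤ (blockStart p q i + β) * q :=
    Nat.mul_le_mul_right q h
  have h₄ : (i + 1) * p = i * p + p := by ring
  nlinarith

/-- Within the `i`-th block, exactly the first `β` indices have residue less than `β * q`. -/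
lemma blockStart_add_mul_mod_lt_iff (hq : 1 ≤ q) (β i t : ℕ)
    (ht : t < blockStart p q (i + 1) - blockStart p q i) :
    (blockStart p q i + t) * q % p < β * q ↔ t < β := by
  have h₁ := blockStart_mul_lt (p := p) hq i
  have h₂ := le_blockStart_mul (p := p) hq i
  have h₃ := blockStart_mul_lt (p := p) hq (i + 1)
  obtain ⟨s, hs⟩ := Nat.exists_eq_add_of_le h₂
  have hsq : s < q := by omega
  have h₄ : (blockStart p q i + t + 1) * q ≤ blockStart p q (i + 1) * q :=
    Nat.mul_le_mul_right q (by omega)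
  have h₅ : (blockStart p q i + t) * q = s + t * q + p * i := by
    rw [add_mul, hs]; ring
  have h₆ : s + t * q < p := by nlinarith
  rw [h₅, Nat.add_mul_mod_self_left, Nat.mod_eq_of_lt h₆]
  constructor
  · intro h
    exact lt_of_mul_lt_mul_right (by omega : t * q < β * q) (Nat.zero_le q)
  · intro h
    have : (t + 1) * q ≤ β * q := Nat.mul_le_mul_right q h
    nlinarith

lemma what_mul_eq_prod_ofFn (hq : 1 ≤ q) {β : ℕ} (hβ : β * q < p) :
    what p q (β * q) = (List.ofFn (fun i : Fin q =>
      xx ^ β * yy ^ (blockStart p q (i + 1) - blockStart p q i - β))).prod := by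
  have h := prod_map_range_eq_prod_ofFn_blocks
    (fun j => if j * q % p < β * q then xx else yy) (blockStart p q) blockStart_mono
    (blockStart_zero hq) q
  rw [blockStart_self hq] at h
  rw [what, h]
  congr 2
  funext i
  have hle := blockStart_add_le hq hβ i
  rw [← prod_map_range_ite_lt, Nat.add_sub_cancel' (by omega)]
  congr 1
  refine List.map_congr_left fun t ht => ?_
  simp only [blockStart_add_mul_mod_lt_iff hq β i t (List.mem_range.mp ht)]

end blockStart

/-- For coprime `p, q` with `1 ≤ q < p/2`, there are positive integers
`k_1, …, k_q` with `ŵ_{p,q,q} = x y^{k_1} ⋯ x y^{k_q}`, and for every `β ≥ 1`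
with `β q < p` one has `k_i + 1 - β ≥ 0` for each `i` and
`ŵ_{p,q,βq} = x^β y^{k_1+1-β} ⋯ x^β y^{k_q+1-β}`. -/
theorem stmt12 (p q : ℕ) (hpq : Nat.Coprime p q) (hq1 : 1 ≤ q) (hq2 : 2 * q < p) :
    ∃ k : Fin q → ℕ, (∀ i, 0 < k i) ∧
      what p q q = (List.ofFn (fun i : Fin q => xx * yy ^ (k i))).prod ∧
      ∀ β : ℕ, 1 ≤ β → β * q < p →
        (∀ i, (0 : ℤ) ≤ (k i : ℤ) + 1 - β) ∧
        what p q (β * q) =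
          (List.ofFn (fun i : Fin q => xx ^ (β : ℤ) * yy ^ ((k i : ℤ) + 1 - β))).prod := by
  have hlen (β : ℕ) (hβ : β * q < p) (i : ℕ) := blockStart_add_le hq1 hβ i
  refine ⟨fun i => blockStart p q (i + 1) - blockStart p q i - 1, fun i => ?_, ?_,
    fun β _ hβ => ⟨fun i => ?_, ?_⟩⟩
  · have := hlen 2 hq2 i
    dsimp only
    omega
  · simpa using what_mul_eq_prod_ofFn (β := 1) hq1 (by omega : 1 * q < p)
  · have := hlen β hβ i
    dsimp only
    omega
  · rw [what_mul_eq_prod_ofFn hq1 hβ]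
    congr 2
    funext i
    have := hlen β hβ i
    rw [zpow_natCast, ← zpow_natCast yy]
    congr 2
    dsimp only
    omega
end

section
/- For every integer n, there is an automorphism of the free group F on x and y mapping x^{2n+1} y x^{−2n} y to x^{4n+1} y^2; consequently the one-relator group ⟨x, y | x^{2n+1} y x^{−2n} y⟩ (the quotient of F by the normal closure of x^{2n+1} y x^{−2n} y) is isomorphic to G_{2, 4n+1}. (This says the slope-2 embedding of the twist knot K_n is (2, 4n+1) Seifert-fibered with respect to the outside handlebody.) -/
/-- The automorphism of the free group fixing `x` and sending `y` to `x ^ k * y`. -/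
def shear (k : ℤ) : FreeGroup (Fin 2) ≃* FreeGroup (Fin 2) :=
  MonoidHom.toMulEquiv (FreeGroup.lift ![xx, xx ^ k * yy]) (FreeGroup.lift ![xx, xx ^ (-k) * yy])
    (by ext i; fin_cases i <;> simp [xx, yy])
    (by ext i; fin_cases i <;> simp [xx, yy])

lemma shear_xx (k : ℤ) : shear k xx = xx := by
  simp [shear, xx]

lemma shear_yy (k : ℤ) : shear k yy = xx ^ k * yy := by
  simp [shear, yy]

/-- The automorphism of the free group exchanging `x` and `y`. -/
def swapGenerators : FreeGroup (Fin 2) ≃* FreeGroup (Fin 2) :=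
  FreeGroup.freeGroupCongr (Equiv.swap 0 1)

lemma swapGenerators_xx : swapGenerators xx = yy := by
  simp [swapGenerators, xx, yy]

lemma swapGenerators_yy : swapGenerators yy = xx := by
  simp [swapGenerators, xx, yy]

/-- An automorphism carrying `g` to `x ^ a * y ^ b` identifies `F / ⟪g⟫` with `G_{a,b}`. -/
lemma isSF_of_mulEquiv {g : FreeGroup (Fin 2)} {a b : ℤ}
    (φ : FreeGroup (Fin 2) ≃* FreeGroup (Fin 2)) (h : φ g = xx ^ a * yy ^ b) : IsSF g a b := by
  refine ⟨QuotientGroup.congr _ _ φ ?_⟩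
  rw [← h]
  simpa using Subgroup.map_normalClosure {g} φ.toMonoidHom φ.surjective

lemma shear_twist_word (n : ℤ) :
    shear (2 * n) (xx ^ (2 * n + 1) * yy * xx ^ (-(2 * n)) * yy) =
      xx ^ (4 * n + 1) * yy ^ (2 : ℤ) := by
  simp only [map_mul, map_zpow, shear_xx, shear_yy, zpow_two]
  group

/-- For every integer `n`, some automorphism of the free group maps
`x^{2n+1} y x^{-2n} y` to `x^{4n+1} y^2`; consequently
`⟨x, y | x^{2n+1} y x^{-2n} y⟩ ≅ G_{2, 4n+1}` (the slope-2 embedding of the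
twist knot `K_n` is `(2, 4n+1)` Seifert-fibered w.r.t. the outside handlebody). -/
theorem stmt13 (n : ℤ) :
    (∃ φ : FreeGroup (Fin 2) ≃* FreeGroup (Fin 2),
      φ (xx ^ (2 * n + 1) * yy * xx ^ (-(2 * n)) * yy) = xx ^ (4 * n + 1) * yy ^ (2 : ℤ)) ∧
    IsSF (xx ^ (2 * n + 1) * yy * xx ^ (-(2 * n)) * yy) 2 (4 * n + 1) := by
  refine ⟨⟨shear (2 * n), shear_twist_word n⟩, isSF_of_mulEquiv
    (((shear (2 * n)).trans swapGenerators).trans (MulAut.conj (yy ^ (-(4 * n + 1))))) ?_⟩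
  rw [MulEquiv.trans_apply, MulEquiv.trans_apply, shear_twist_word, MulAut.conj_apply]
  simp only [map_mul, map_zpow, swapGenerators_xx, swapGenerators_yy]
  group
end

section
/- Let a and b be nonzero integers. The one-relator group G_{a,b} = ⟨x, y | x^a y^b⟩ is isomorphic to the infinite cyclic group ℤ if and only if |a| = 1 or |b| = 1. -/
/-- In a free product, nontrivial elements of two different factors do not commute. -/
theorem Monoid.CoprodI.not_commute_of_of {ι : Type*} {M : ι → Type*} [∀ i, Monoid (M i)]
    {i j : ι} (hij : i ≠ j) {m : M i} {n : M j} (hm : m ≠ 1) (hn : n ≠ 1) :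
    ¬ Commute (of m : CoprodI M) (of n) := by
  classical
  intro h
  let u := NeWord.append (.singleton m hm) hij (.singleton n hn)
  let v := NeWord.append (.singleton n hn) hij.symm (.singleton m hm)
  have huv : u.prod = v.prod := by simpa [u, v] using h.eq
  have hw : u.toWord = v.toWord := Word.equiv.symm.injective huv
  have hl : u.toList = v.toList := congrArg Word.toList hw
  simp only [u, v, NeWord.toList, List.singleton_append, List.cons.injEq, Sigma.mk.injEq] at hl
  exact hij hl.1.1

/-- A presented group is infinite cyclic as soon as the powers of one element contain all
generators and some homomorphism to `ℤ` sends that element to `1`. -/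
theorem PresentedGroup.nonempty_mulEquiv_int {α : Type*} {rels : Set (FreeGroup α)}
    (φ : PresentedGroup rels →* Multiplicative ℤ) (g : PresentedGroup rels)
    (hg : φ g = Multiplicative.ofAdd 1)
    (hgen : ∀ i, (PresentedGroup.of i : PresentedGroup rels) ∈ Subgroup.zpowers g) :
    Nonempty (PresentedGroup rels ≃* Multiplicative ℤ) := by
  have htop : Subgroup.zpowers g = ⊤ := by
    rw [eq_top_iff, ← PresentedGroup.closure_range_of rels, Subgroup.closure_le]
    rintro _ ⟨i, rfl⟩
    exact hgen i
  have hpow (k : ℤ) : φ (g ^ k) = Multiplicative.ofAdd k := by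
    rw [map_zpow, hg, ← ofAdd_zsmul, smul_eq_mul, mul_one]
  refine ⟨MulEquiv.ofBijective φ ⟨?_, fun k => ⟨g ^ k.toAdd, by rw [hpow, ofAdd_toAdd]⟩⟩⟩
  rw [injective_iff_map_eq_one]
  intro h hh
  obtain ⟨k, rfl⟩ := Subgroup.mem_zpowers_iff.1 (htop ▸ Subgroup.mem_top h)
  rw [hpow, ofAdd_eq_one] at hh
  rw [hh, zpow_zero]

/-- The universal property of `G_{a,b}`. -/
theorem Gg.exists_hom {H : Type*} [Group H] {a b : ℤ} (s t : H) (h : s ^ a * t ^ b = 1) :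
    ∃ φ : Gg a b →* H, φ (PresentedGroup.of 0) = s ∧ φ (PresentedGroup.of 1) = t := by
  have hrel : ∀ r ∈ ({xx ^ a * yy ^ b} : Set (FreeGroup (Fin 2))),
      FreeGroup.lift ![s, t] r = 1 := by
    rintro _ rfl
    simpa [xx, yy] using h
  exact ⟨PresentedGroup.toGroup hrel, by simp, by simp⟩

/-- The defining relation of `G_{a,b}`. -/
theorem Gg.relation (a b : ℤ) :
    (PresentedGroup.of 0 : Gg a b) ^ a * PresentedGroup.of 1 ^ b = 1 :=
  PresentedGroup.one_of_mem (rels := {xx ^ a * yy ^ b}) rfl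

/-- If `|a|` and `|b|` both differ from `1`, the generators of `G_{a,b}` do not commute. -/
theorem Gg.not_commute_of_of {a b : ℤ} (ha : |a| ≠ 1) (hb : |b| ≠ 1) :
    ¬ Commute (PresentedGroup.of 0 : Gg a b) (PresentedGroup.of 1) := by
  intro hcomm
  let M : Fin 2 → Type := fun i => Multiplicative (ZMod (![a, b] i).natAbs)
  let γ (i : Fin 2) : M i := Multiplicative.ofAdd 1
  have hpow (i : Fin 2) : γ i ^ (![a, b] i) = 1 := by
    change Multiplicative.ofAdd (![a, b] i • (1 : ZMod (![a, b] i).natAbs)) = 1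
    rw [ofAdd_eq_one, zsmul_one, ZMod.intCast_zmod_eq_zero_iff_dvd]
    exact Int.natAbs_dvd.2 dvd_rfl
  have hne (i : Fin 2) (hi : |![a, b] i| ≠ 1) : γ i ≠ 1 := by
    have : Nontrivial (ZMod (![a, b] i).natAbs) :=
      ZMod.nontrivial_iff.2 fun h => hi (by rw [Int.abs_eq_natAbs, h, Nat.cast_one])
    exact fun h => one_ne_zero (ofAdd_eq_one.1 h)
  obtain ⟨φ, h0, h1⟩ := Gg.exists_hom (a := a) (b := b)
    (Monoid.CoprodI.of (γ 0) : Monoid.CoprodI M) (Monoid.CoprodI.of (γ 1)) (by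
      have e0 : γ 0 ^ a = 1 := hpow 0
      have e1 : γ 1 ^ b = 1 := hpow 1
      rw [← map_zpow Monoid.CoprodI.of (γ 0), ← map_zpow Monoid.CoprodI.of (γ 1), e0, e1,
        map_one, map_one, one_mul])
  have h := hcomm.map φ
  rw [h0, h1] at h
  exact Monoid.CoprodI.not_commute_of_of (by decide) (hne 0 ha) (hne 1 hb) h

/-- If `u ^ a` lies in a subgroup and `a * a = 1`, then so does `u`. -/
theorem Subgroup.mem_of_zpow_mem_of_mul_self_eq_one {G : Type*} [Group G] {K : Subgroup G} {u : G}
    {a : ℤ} (ha : a * a = 1) (h : u ^ a ∈ K) : u ∈ K := by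
  have := K.zpow_mem h a
  rwa [← zpow_mul, ha, zpow_one] at this

/-- For nonzero integers `a, b`, the one-relator group
`G_{a,b} = ⟨x, y | x^a y^b⟩` is infinite cyclic iff `|a| = 1` or `|b| = 1`. -/
theorem stmt19 (a b : ℤ) (ha : a ≠ 0) (hb : b ≠ 0) :
    Nonempty (Gg a b ≃* Multiplicative ℤ) ↔ |a| = 1 ∨ |b| = 1 := by
  constructor
  · rintro ⟨e⟩
    by_contra! h
    refine Gg.not_commute_of_of h.1 h.2 (e.injective ?_)
    rw [map_mul, map_mul, mul_comm]
  · rintro (h | h)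
    · have h2 : a * a = 1 := by rw [← abs_mul_abs_self, h, one_mul]
      obtain ⟨φ, -, h1⟩ := Gg.exists_hom (a := a) (b := b)
        (Multiplicative.ofAdd (-(a * b))) (Multiplicative.ofAdd 1) (by
          rw [← ofAdd_zsmul, ← ofAdd_zsmul, ← ofAdd_add, ofAdd_eq_one, smul_eq_mul, smul_eq_mul]
          linear_combination -b * h2)
      refine PresentedGroup.nonempty_mulEquiv_int φ (PresentedGroup.of 1) h1
        (Fin.forall_fin_two.2 ⟨?_, Subgroup.mem_zpowers _⟩)
      refine Subgroup.mem_of_zpow_mem_of_mul_self_eq_one h2 ?_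
      rw [eq_inv_of_mul_eq_one_left (Gg.relation a b)]
      exact inv_mem (Subgroup.zpow_mem_zpowers _ _)
    · have h2 : b * b = 1 := by rw [← abs_mul_abs_self, h, one_mul]
      obtain ⟨φ, h0, -⟩ := Gg.exists_hom (a := a) (b := b)
        (Multiplicative.ofAdd 1) (Multiplicative.ofAdd (-(a * b))) (by
          rw [← ofAdd_zsmul, ← ofAdd_zsmul, ← ofAdd_add, ofAdd_eq_one, smul_eq_mul, smul_eq_mul]
          linear_combination -a * h2)
      refine PresentedGroup.nonempty_mulEquiv_int φ (PresentedGroup.of 0) h0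
        (Fin.forall_fin_two.2 ⟨Subgroup.mem_zpowers _, ?_⟩)
      refine Subgroup.mem_of_zpow_mem_of_mul_self_eq_one h2 ?_
      rw [eq_inv_of_mul_eq_one_right (Gg.relation a b)]
      exact inv_mem (Subgroup.zpow_mem_zpowers _ _)
end
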